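/- (Proposition 3: unconditional Lipschitz stability with final-time data.) Under the assumptions of the context, there exists a constant C > 0, depending on n, T, M, δ₀, D, R, p₁ and H but not on y and f (in particular not on any a priori bound on y), such that (∫_D |f(x)|² dx)^{1/2} + (∫₀^T ∫_D (|y(x,t)|² + |∂_t y(x,t)|²) dx dt)^{1/2} ≤ C ( d₁ + (∫_D (|y(x,T)|² + |∇_x y(x,T)|²) dx)^{1/2} ), where d₁ := (∫₀^T ∫_{B_{ρ₁}} |∂_t y(G₁(x'), t)|² ω₁(x') dx' dt)^{1/2}. -/

import Mathlib

noncomputable section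

open MeasureTheory Metric Set
open scoped RealInnerProductSpace

abbrev Esp (n : ℕ) : Type := EuclideanSpace ℝ (Fin n)

/-- The point `(x', xₙ) ∈ ℝ^{d+1} = ℝ^d × ℝ`. -/
noncomputable def graphMk (d : ℕ) (x' : Esp d) (xn : ℝ) : Esp (d+1) :=
  (EuclideanSpace.equiv (Fin (d+1)) ℝ).symm
    (Fin.snoc (⇑(EuclideanSpace.equiv (Fin d) ℝ) x') xn)

/-- `H` is `(M, δ₀)`-admissible on the compact set `K`. -/
def IsAdmissible {n : ℕ} (M δ₀ : ℝ) (K : Set (Esp n)) (H : Esp n → Esp n) : Prop :=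
  ∃ U : Set (Esp n), IsOpen U ∧ Convex ℝ U ∧ K ⊆ U ∧ ContDiffOn ℝ 1 H U ∧
    (∀ x ∈ U, ‖H x‖ ≤ M) ∧ (∀ x ∈ U, ‖fderiv ℝ H x‖ ≤ M) ∧ (∀ x ∈ K, δ₀ < ‖H x‖)

/-- `ψ_H(x) = ⟨x, H(x)⟩`. -/
noncomputable def psiW {n : ℕ} (H : Esp n → Esp n) (x : Esp n) : ℝ := ⟪x, H x⟫

/-- The Carleman weight `φ_H(x,t) = -βt + ψ_H(x)`. -/
noncomputable def phiW {n : ℕ} (β : ℝ) (H : Esp n → Esp n) (x : Esp n) (t : ℝ) : ℝ :=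
  -(β * t) + psiW H x

/-- Outward unit normal `ν₁` of the upper graph `xₙ = ℓ(x')`. -/
noncomputable def nuUp (d : ℕ) (ℓ : Esp d → ℝ) (x' : Esp d) : Esp (d+1) :=
  (Real.sqrt (1 + ‖gradient ℓ x'‖ ^ 2))⁻¹ • graphMk d (-(gradient ℓ x')) 1

/-- Outward unit normal `ν₂` of the lower graph `xₙ = m(x')`. -/
noncomputable def nuDown (d : ℕ) (m : Esp d → ℝ) (x' : Esp d) : Esp (d+1) :=
  (Real.sqrt (1 + ‖gradient m x'‖ ^ 2))⁻¹ • graphMk d (gradient m x') (-1)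

/-- Area element `ω(x') = √(1 + |∇m(x')|²)` of the graph of `m`. -/
noncomputable def omegaW (d : ℕ) (m : Esp d → ℝ) (x' : Esp d) : ℝ :=
  Real.sqrt (1 + ‖gradient m x'‖ ^ 2)

/-- The graph domain `D = {(x', xₙ) : |x'| < ρ₁, ℓ(x') − ℓ̃(x') < xₙ < ℓ(x')}`. -/
def graphDomain (d : ℕ) (ρ₁ : ℝ) (ℓ ℓt : Esp d → ℝ) : Set (Esp (d+1)) :=
  {x | ∃ x' : Esp d, ∃ xn : ℝ, ‖x'‖ < ρ₁ ∧ ℓ x' - ℓt x' < xn ∧ xn < ℓ x' ∧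
    x = graphMk d x' xn}

/-! The time derivative `u = ∂ₜy` solves the transport equation of `y` with source `∂ₜR · f`, and
`u(·, 0) = R(·, 0) f`, so `f` is controlled by the initial trace of `u`. Integrating the equation of
`u²` against `e^{-κt}` over `[0, T]` removes the time variable: the energy
`Z(x) = ∫₀ᵀ e^{-κt} u(x, t)² dt` satisfies
`⟨H, ∇Z⟩ ≥ u(·, 0)² - e^{-κT} u(·, T)² - c Z - C f² / κ`.
Let `ψ` increase along `H` at a positive rate, and integrate the divergence of `e^{sψ} Z H` over the
domain. A large `κ` absorbs the source `C f² / κ` and the part of `u(·, T)` that the equation at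
time `T` expresses through `f`; then a large `s` absorbs the term `c Z`, in which `c` grows with
`κ`. The flux through the lower graph has a favourable sign, so that only the data on the upper
graph and at time `T` remain. Finally `y` is recovered from `∂ₜy` by Poincaré's inequality in time.
For an admissible `H` on a domain of small diameter whose closure contains `0`, the weight
`ψ(x) = ⟨x, H(x)⟩` increases along `H`. -/

open Filter Topology

/-! ### Boundary layers on an interval -/

/-- A smooth cutoff on `ℝ`, equal to `0` on `(-∞, 1]` and to `1` on `[2, ∞)`. -/
def cutoff (t : ℝ) : ℝ := Real.smoothTransition (t - 1)

lemma contDiff_cutoff : ContDiff ℝ 1 cutoff :=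
  (Real.smoothTransition.contDiff (n := 1)).comp (contDiff_id.sub contDiff_const)

lemma cutoff_nonneg (t : ℝ) : 0 ≤ cutoff t := Real.smoothTransition.nonneg _

lemma cutoff_le_one (t : ℝ) : cutoff t ≤ 1 := Real.smoothTransition.le_one _

lemma cutoff_of_le {t : ℝ} (h : t ≤ 1) : cutoff t = 0 :=
  Real.smoothTransition.zero_of_nonpos (by linarith)

lemma cutoff_of_ge {t : ℝ} (h : 2 ≤ t) : cutoff t = 1 :=
  Real.smoothTransition.one_of_one_le (by linarith)

lemma hasDerivAt_cutoff (t : ℝ) : HasDerivAt cutoff (deriv cutoff t) t :=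
  (contDiff_cutoff.differentiable one_ne_zero t).hasDerivAt

lemma continuous_deriv_cutoff : Continuous (deriv cutoff) :=
  contDiff_cutoff.continuous_deriv le_rfl

lemma deriv_cutoff_nonneg (t : ℝ) : 0 ≤ deriv cutoff t :=
  Monotone.deriv_nonneg fun _ _ h => Real.smoothTransition.monotone (by linarith)

lemma deriv_cutoff_of_gt {t : ℝ} (h : 2 < t) : deriv cutoff t = 0 := by
  have hone : cutoff =ᶠ[𝓝 t] fun _ => 1 := by
    filter_upwards [Ioi_mem_nhds h] with s hs using cutoff_of_ge (le_of_lt hs)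
  rw [hone.deriv_eq, deriv_const]

/-- The weight `k η'(k a) η(k b)`, where `η` is the cutoff. When `a` and `b` are the distances to
two opposite boundary pieces, it concentrates unit mass, as `k → ∞`, on the piece `a = 0`. -/
def boundaryLayer (k a b : ℝ) : ℝ := k * deriv cutoff (k * a) * cutoff (k * b)

lemma continuous_boundaryLayer (k : ℝ) :
    Continuous fun q : ℝ × ℝ => boundaryLayer k q.1 q.2 := by
  have := continuous_deriv_cutoff
  have := contDiff_cutoff.continuous
  unfold boundaryLayer
  fun_prop

lemma continuous_deriv_cutoff_sub (k b : ℝ) :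
    Continuous fun s => k * deriv cutoff (k * (b - s)) := by
  have := continuous_deriv_cutoff
  fun_prop

lemma integral_deriv_cutoff_sub (k a b : ℝ) :
    ∫ s in a..b, k * deriv cutoff (k * (b - s)) = cutoff (k * (b - a)) := by
  have hderiv (s : ℝ) :
      HasDerivAt (fun s => -cutoff (k * (b - s))) (k * deriv cutoff (k * (b - s))) s := by
    have hinner : HasDerivAt (fun s => k * (b - s)) (k * (-1)) s :=
      ((hasDerivAt_id s).const_sub b).const_mul k
    have hcomp := ((hasDerivAt_cutoff (k * (b - s))).comp s hinner).neg
    exact hcomp.congr_deriv (by ring)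
  rw [intervalIntegral.integral_eq_sub_of_hasDerivAt (fun s _ => hderiv s)
    ((continuous_deriv_cutoff_sub k b).intervalIntegrable _ _)]
  simp [cutoff_of_le]

lemma abs_integral_le_of_abs_le_deriv_cutoff {a b k C : ℝ} (hab : a ≤ b) (hC : 0 ≤ C) {g : ℝ → ℝ}
    (hg : ∀ s ∈ Icc a b, |g s| ≤ k * deriv cutoff (k * (b - s)) * C) :
    |∫ s in a..b, g s| ≤ C := by
  have hbound := intervalIntegral.norm_integral_le_of_norm_le (μ := volume) (f := g) hab
    (Eventually.of_forall fun s hs => hg s (Ioc_subset_Icc_self hs))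
    (((continuous_deriv_cutoff_sub k b).mul_const C).intervalIntegrable _ _)
  rw [intervalIntegral.integral_mul_const, integral_deriv_cutoff_sub] at hbound
  exact hbound.trans (mul_le_of_le_one_left hC (cutoff_le_one _))

lemma intervalIntegrable_boundaryLayer {a b : ℝ} (hab : a ≤ b) {h : ℝ → ℝ}
    (hh : ContinuousOn h (Icc a b)) (k : ℝ) :
    IntervalIntegrable (fun s => boundaryLayer k (b - s) (s - a) * h s) volume a b := by
  have hlayer : Continuous fun s => boundaryLayer k (b - s) (s - a) :=
    (continuous_boundaryLayer k).comp (f := fun s : ℝ => (b - s, s - a)) (by fun_prop)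
  exact (hlayer.continuousOn.mul hh).intervalIntegrable_of_Icc hab

lemma abs_integral_boundaryLayer_right_le {a b k C : ℝ} (hab : a ≤ b) (hk : 0 ≤ k) {h : ℝ → ℝ}
    (hC : ∀ s ∈ Icc a b, |h s| ≤ C) :
    |∫ s in a..b, boundaryLayer k (b - s) (s - a) * h s| ≤ C := by
  have hC₀ : 0 ≤ C := (abs_nonneg _).trans (hC a (left_mem_Icc.2 hab))
  refine abs_integral_le_of_abs_le_deriv_cutoff (k := k) hab hC₀ fun s hs => ?_
  have hpos := mul_nonneg hk (deriv_cutoff_nonneg (k * (b - s)))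
  rw [boundaryLayer, mul_assoc, abs_mul, abs_of_nonneg hpos, abs_mul,
    abs_of_nonneg (cutoff_nonneg _)]
  gcongr
  exact (mul_le_of_le_one_left (abs_nonneg _) (cutoff_le_one _)).trans (hC s hs)

lemma abs_integral_boundaryLayer_right_sub_le {a b k ε : ℝ} (hab : a ≤ b) (hk : 4 ≤ k * (b - a))
    {h : ℝ → ℝ} (hh : ContinuousOn h (Icc a b))
    (hε : ∀ s ∈ Icc a b, k * (b - s) ≤ 2 → |h s - h b| ≤ ε) :
    |(∫ s in a..b, boundaryLayer k (b - s) (s - a) * h s) - h b| ≤ ε := by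
  have hk₀ : 0 ≤ k := (pos_of_mul_pos_left (by linarith) (sub_nonneg.2 hab)).le
  have hε₀ : 0 ≤ ε := (abs_nonneg _).trans (hε b (right_mem_Icc.2 hab) (by simp))
  have hmass : ∫ s in a..b, k * deriv cutoff (k * (b - s)) * h b = h b := by
    rw [intervalIntegral.integral_mul_const, integral_deriv_cutoff_sub,
      cutoff_of_ge (by linarith), one_mul]
  have hint : IntervalIntegrable (fun s => k * deriv cutoff (k * (b - s)) * h b) volume a b :=
    ((continuous_deriv_cutoff_sub k b).mul_const _).intervalIntegrable _ _
  rw [← hmass, ← intervalIntegral.integral_sub (intervalIntegrable_boundaryLayer hab hh k) hint]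
  refine abs_integral_le_of_abs_le_deriv_cutoff (k := k) hab hε₀ fun s hs => ?_
  rcases lt_or_ge 2 (k * (b - s)) with hfar | hnear
  · simp [boundaryLayer, deriv_cutoff_of_gt hfar]
  · have hone : cutoff (k * (s - a)) = 1 := cutoff_of_ge (by linarith)
    have hpos := mul_nonneg hk₀ (deriv_cutoff_nonneg (k * (b - s)))
    rw [boundaryLayer, hone, mul_one, ← mul_sub, abs_mul, abs_of_nonneg hpos]
    gcongr
    exact hε s hs hnear

lemma tendsto_integral_boundaryLayer_right {a b : ℝ} (hab : a < b) {h : ℝ → ℝ}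
    (hh : ContinuousOn h (Icc a b)) :
    Tendsto (fun k : ℕ => ∫ s in a..b, boundaryLayer k (b - s) (s - a) * h s) atTop
      (𝓝 (h b)) := by
  refine Metric.tendsto_nhds.2 fun ε hε => ?_
  obtain ⟨δ, hδ, hhδ⟩ :=
    Metric.continuousOn_iff.1 hh b (right_mem_Icc.2 hab.le) (ε / 2) (half_pos hε)
  have htop := tendsto_natCast_atTop_atTop (R := ℝ)
  filter_upwards [(htop.atTop_mul_const (sub_pos.2 hab)).eventually_ge_atTop 4,
    (htop.atTop_mul_const hδ).eventually_gt_atTop 2] with k hk hkδ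
  refine (abs_integral_boundaryLayer_right_sub_le hab.le hk hh fun s hs hnear => ?_).trans_lt
    (half_lt_self hε)
  refine (hhδ s hs ?_).le
  rw [Real.dist_eq, abs_sub_comm, abs_of_nonneg (sub_nonneg.2 hs.2)]
  exact lt_of_mul_lt_mul_left (hnear.trans_lt hkδ) k.cast_nonneg

lemma integral_boundaryLayer_left (k a b : ℝ) (h : ℝ → ℝ) :
    ∫ s in a..b, boundaryLayer k (s - a) (b - s) * h s
      = ∫ s in a..b, boundaryLayer k (b - s) (s - a) * h (a + b - s) := by
  have hreflect := intervalIntegral.integral_comp_sub_left (a := a) (b := b)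
    (fun s => boundaryLayer k (s - a) (b - s) * h s) (a + b)
  rw [add_sub_cancel_right, add_sub_cancel_left] at hreflect
  rw [← hreflect]
  congr 1 with s
  rw [show a + b - s - a = b - s by ring, show b - (a + b - s) = s - a by ring]

lemma mapsTo_const_sub_Icc (a b : ℝ) : MapsTo (fun s => a + b - s) (Icc a b) (Icc a b) :=
  fun s hs => ⟨by linarith [hs.2], by linarith [hs.1]⟩

lemma abs_integral_boundaryLayer_left_le {a b k C : ℝ} (hab : a ≤ b) (hk : 0 ≤ k) {h : ℝ → ℝ}
    (hC : ∀ s ∈ Icc a b, |h s| ≤ C) :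
    |∫ s in a..b, boundaryLayer k (s - a) (b - s) * h s| ≤ C := by
  rw [integral_boundaryLayer_left]
  exact abs_integral_boundaryLayer_right_le hab hk
    fun s hs => hC _ (mapsTo_const_sub_Icc a b hs)

lemma tendsto_integral_boundaryLayer_left {a b : ℝ} (hab : a < b) {h : ℝ → ℝ}
    (hh : ContinuousOn h (Icc a b)) :
    Tendsto (fun k : ℕ => ∫ s in a..b, boundaryLayer k (s - a) (b - s) * h s) atTop
      (𝓝 (h a)) := by
  have hreflect : ContinuousOn (fun s => h (a + b - s)) (Icc a b) :=
    hh.comp (by fun_prop) (mapsTo_const_sub_Icc a b)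
  simpa [integral_boundaryLayer_left] using tendsto_integral_boundaryLayer_right hab hreflect

/-! ### The divergence -/

/-- The divergence of a vector field on Euclidean space. -/
def divergence {n : ℕ} (X : Esp n → Esp n) (x : Esp n) : ℝ :=
  ∑ i, fderiv ℝ X x (EuclideanSpace.single i 1) i

lemma abs_divergence_le {n : ℕ} (X : Esp n → Esp n) (x : Esp n) :
    |divergence X x| ≤ n * ‖fderiv ℝ X x‖ := by
  have hentry (i : Fin n) : |fderiv ℝ X x (EuclideanSpace.single i 1) i| ≤ ‖fderiv ℝ X x‖ :=
    (PiLp.norm_apply_le _ i).trans (((fderiv ℝ X x).le_opNorm _).trans (by simp))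
  calc |divergence X x| ≤ ∑ i, |fderiv ℝ X x (EuclideanSpace.single i 1) i| :=
        Finset.abs_sum_le_sum_abs _ _
    _ ≤ ∑ _i : Fin n, ‖fderiv ℝ X x‖ := Finset.sum_le_sum fun i _ => hentry i
    _ = n * ‖fderiv ℝ X x‖ := by simp

lemma continuous_divergence {n : ℕ} {X : Esp n → Esp n} (hX : ContDiff ℝ 1 X) :
    Continuous (divergence X) := by
  have := hX.continuous_fderiv one_ne_zero
  unfold divergence
  fun_prop

lemma divergence_congr {n : ℕ} {F G : Esp n → Esp n} {x : Esp n} (h : F =ᶠ[𝓝 x] G) :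
    divergence F x = divergence G x := by
  simp only [divergence, h.fderiv_eq]

lemma divergence_eq_zero_of_eventuallyEq_zero {n : ℕ} {F : Esp n → Esp n} {x : Esp n}
    (h : F =ᶠ[𝓝 x] 0) : divergence F x = 0 := by
  simp [divergence, h.fderiv_eq]

lemma sum_apply_single_mul {n : ℕ} (φ : Esp n →L[ℝ] ℝ) (v : Esp n) :
    ∑ i, φ (EuclideanSpace.single i 1) * v i = φ v := by
  conv_rhs => rw [← (EuclideanSpace.basisFun (Fin n) ℝ).sum_repr v, map_sum]
  simp [mul_comm]

lemma divergence_smul {n : ℕ} {c : Esp n → ℝ} {F : Esp n → Esp n} {x : Esp n}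
    (hc : DifferentiableAt ℝ c x) (hF : DifferentiableAt ℝ F x) :
    divergence (c • F) x = c x * divergence F x + fderiv ℝ c x (F x) := by
  simp only [divergence, fderiv_smul hc hF, add_apply, smul_apply,
    ContinuousLinearMap.smulRight_apply, PiLp.add_apply, PiLp.smul_apply, smul_eq_mul,
    Finset.sum_add_distrib, ← Finset.mul_sum, sum_apply_single_mul]

lemma integral_fderiv_apply_eq_zero {n : ℕ} {g : Esp n → ℝ} (hg : ContDiff ℝ 1 g)
    (hc : HasCompactSupport g) (v : Esp n) : ∫ x, fderiv ℝ g x v = 0 := by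
  have hcont : Continuous fun x => fderiv ℝ g x v :=
    (hg.continuous_fderiv one_ne_zero).clm_apply continuous_const
  have hint := hcont.integrable_of_hasCompactSupport (μ := volume) (hc.fderiv_apply ℝ v)
  have hparts := integral_mul_fderiv_eq_neg_fderiv_mul_of_integrable
    (μ := (volume : Measure (Esp n))) (f := g) (g := fun _ => (1 : ℝ)) (v := v)
    (by simpa using hint) (by simp)
    (by simpa using hg.continuous.integrable_of_hasCompactSupport hc)
    (fun x _ => hg.differentiable one_ne_zero x) (fun _ _ => differentiableAt_const _)
  simpa using hparts.symm

lemma divergence_eq_sum_fderiv {n : ℕ} {X : Esp n → Esp n} {x : Esp n}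
    (hX : DifferentiableAt ℝ X x) :
    divergence X x = ∑ i, fderiv ℝ (fun z => X z i) x (EuclideanSpace.single i 1) := by
  refine Finset.sum_congr rfl fun i _ => ?_
  have hcoord : HasFDerivAt (fun z => X z i)
      ((EuclideanSpace.proj i : Esp n →L[ℝ] ℝ).comp (fderiv ℝ X x)) x :=
    (EuclideanSpace.proj i : Esp n →L[ℝ] ℝ).hasFDerivAt.comp x hX.hasFDerivAt
  rw [hcoord.fderiv]
  rfl

lemma integral_divergence_eq_zero {n : ℕ} {X : Esp n → Esp n} (hX : ContDiff ℝ 1 X)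
    (hc : HasCompactSupport X) : ∫ x, divergence X x = 0 := by
  have hXi (i : Fin n) : ContDiff ℝ 1 fun x => X x i :=
    (EuclideanSpace.proj i : Esp n →L[ℝ] ℝ).contDiff.comp hX
  have hci (i : Fin n) : HasCompactSupport fun x => X x i :=
    hc.comp_left (g := fun v : Esp n => v i) rfl
  have hint (i : Fin n) :
      Integrable fun x => fderiv ℝ (fun z => X z i) x (EuclideanSpace.single i 1) :=
    (((hXi i).continuous_fderiv one_ne_zero).clm_apply
      continuous_const).integrable_of_hasCompactSupport ((hci i).fderiv_apply ℝ _)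
  simp_rw [divergence_eq_sum_fderiv (hX.differentiable one_ne_zero _)]
  rw [integral_finsetSum _ fun i _ => hint i]
  exact Finset.sum_eq_zero fun i _ => integral_fderiv_apply_eq_zero (hXi i) (hci i) _

lemma contDiff_indicator {n : ℕ} {D S : Set (Esp n)} (hD : IsOpen D) (hS : IsClosed S)
    (hSD : S ⊆ D) {X : Esp n → Esp n} (hX : ContDiffOn ℝ 1 X D) (hXS : ∀ x ∈ D \ S, X x = 0) :
    ContDiff ℝ 1 (D.indicator X) := by
  refine contDiff_iff_contDiffAt.2 fun x => ?_
  by_cases hx : x ∈ S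
  · refine (hX.contDiffAt (hD.mem_nhds (hSD hx))).congr_of_eventuallyEq ?_
    filter_upwards [hD.mem_nhds (hSD hx)] with z hz using indicator_of_mem hz X
  · refine (contDiffAt_const (c := 0)).congr_of_eventuallyEq ?_
    filter_upwards [hS.isOpen_compl.mem_nhds hx] with z hz
    exact indicator_apply_eq_zero.2 fun hzD => hXS z ⟨hzD, hz⟩

lemma setIntegral_divergence_eq_zero {n : ℕ} {D S : Set (Esp n)} (hD : IsOpen D)
    (hS : IsCompact S) (hSD : S ⊆ D) {X : Esp n → Esp n} (hX : ContDiffOn ℝ 1 X D)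
    (hXS : ∀ x ∈ D \ S, X x = 0) :
    IntegrableOn (divergence X) D ∧ ∫ x in D, divergence X x = 0 := by
  have hsmooth : ContDiff ℝ 1 (D.indicator X) := contDiff_indicator hD hS.isClosed hSD hX hXS
  have hzero (x) (hx : x ∉ S) : D.indicator X x = 0 :=
    indicator_apply_eq_zero.2 fun hxD => hXS x ⟨hxD, hx⟩
  have hcompact : HasCompactSupport (D.indicator X) := HasCompactSupport.intro hS hzero
  have hdiv_zero (x) (hx : x ∉ S) : divergence (D.indicator X) x = 0 :=
    divergence_eq_zero_of_eventuallyEq_zero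
      (by filter_upwards [hS.isClosed.isOpen_compl.mem_nhds hx] with z hz using hzero z hz)
  have heq : EqOn (divergence (D.indicator X)) (divergence X) D := fun x hx =>
    divergence_congr (by filter_upwards [hD.mem_nhds hx] with z hz using indicator_of_mem hz X)
  constructor
  · refine IntegrableOn.congr_fun ?_ heq hD.measurableSet
    exact ((continuous_divergence hsmooth).integrable_of_hasCompactSupport
      (HasCompactSupport.intro hS hdiv_zero)).integrableOn
  · rw [← setIntegral_congr_fun hD.measurableSet heq,
      setIntegral_eq_integral_of_forall_compl_eq_zero
        fun x hx => hdiv_zero x fun hxS => hx (hSD hxS)]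
    exact integral_divergence_eq_zero hsmooth hcompact

variable {d : ℕ}

/-! ### Coordinates and the graph domain -/

/-- The projection `(x', xₙ) ↦ x'`. -/
def headProj (d : ℕ) : Esp (d + 1) →L[ℝ] Esp d :=
  ((EuclideanSpace.equiv (Fin d) ℝ).symm : (Fin d → ℝ) →L[ℝ] Esp d).comp
    (ContinuousLinearMap.pi fun i => (EuclideanSpace.proj i.castSucc : Esp (d + 1) →L[ℝ] ℝ))

/-- The projection `(x', xₙ) ↦ xₙ`. -/
def lastProj (d : ℕ) : Esp (d + 1) →L[ℝ] ℝ := EuclideanSpace.proj (Fin.last d)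

lemma graphMk_castSucc (x' : Esp d) (s : ℝ) (i : Fin d) : graphMk d x' s i.castSucc = x' i := by
  simp [graphMk, EuclideanSpace.equiv]

lemma graphMk_last (x' : Esp d) (s : ℝ) : graphMk d x' s (Fin.last d) = s := by
  simp [graphMk, EuclideanSpace.equiv]

@[simp] lemma headProj_graphMk (x' : Esp d) (s : ℝ) : headProj d (graphMk d x' s) = x' := by
  ext i
  exact graphMk_castSucc x' s i

@[simp] lemma lastProj_graphMk (x' : Esp d) (s : ℝ) : lastProj d (graphMk d x' s) = s :=
  graphMk_last x' s

lemma graphMk_headProj_lastProj (x : Esp (d + 1)) :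
    graphMk d (headProj d x) (lastProj d x) = x := by
  ext i
  refine Fin.lastCases (graphMk_last _ _) (fun j => graphMk_castSucc _ _ j) i

lemma inner_graphMk (x : Esp (d + 1)) (b : Esp d) (r : ℝ) :
    ⟪x, graphMk d b r⟫ = ⟪headProj d x, b⟫ + lastProj d x * r := by
  simp only [PiLp.inner_apply, Fin.sum_univ_castSucc, graphMk_castSucc, graphMk_last]
  simp [headProj, lastProj, mul_comm]

lemma norm_graphMk (b : Esp d) (r : ℝ) : ‖graphMk d b r‖ = √(r ^ 2 + ‖b‖ ^ 2) := by
  rw [norm_eq_sqrt_real_inner, inner_graphMk]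
  simp [add_comm, pow_two]

lemma continuous_graphMk : Continuous fun p : Esp d × ℝ => graphMk d p.1 p.2 := by
  refine (EuclideanSpace.equiv (Fin (d + 1)) ℝ).comp_continuous_iff.1 (continuous_pi fun i => ?_)
  refine Fin.lastCases ?_ (fun j => ?_) i
  · simpa [graphMk_last] using continuous_snd
  · simp only [Function.comp_def, PiLp.coe_continuousLinearEquiv, graphMk_castSucc]
    fun_prop

lemma measurableEmbedding_graphMk :
    MeasurableEmbedding fun p : Esp d × ℝ => graphMk d p.1 p.2 :=
  MeasurableEquiv.measurableEmbedding
    { toFun := fun p => graphMk d p.1 p.2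
      invFun := fun x => (headProj d x, lastProj d x)
      left_inv := fun p => by simp
      right_inv := graphMk_headProj_lastProj
      measurable_toFun := continuous_graphMk.measurable
      measurable_invFun :=
        ((headProj d).continuous.prodMk (lastProj d).continuous).measurable }

lemma measurePreserving_graphMk :
    MeasurePreserving (fun p : Esp d × ℝ => graphMk d p.1 p.2) (volume.prod volume) volume := by
  have hswap : MeasurePreserving (fun p : Esp d × ℝ => (p.2, (WithLp.ofLp p.1 : Fin d → ℝ)))
      (volume.prod volume) (volume.prod volume) :=
    ((MeasurePreserving.id volume).prod (PiLp.volume_preserving_ofLp (Fin d))).comp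
      Measure.measurePreserving_swap
  have hsnoc := (PiLp.volume_preserving_toLp (Fin (d + 1))).comp
    (volume_preserving_piFinSuccAbove (fun _ : Fin (d + 1) => ℝ) (Fin.last d)).symm
  suffices hcomp : (fun p : Esp d × ℝ => graphMk d p.1 p.2) =
      (WithLp.toLp 2 ∘ (MeasurableEquiv.piFinSuccAbove (fun _ => ℝ) (Fin.last d)).symm) ∘
        fun p : Esp d × ℝ => (p.2, (WithLp.ofLp p.1 : Fin d → ℝ)) by
    rw [hcomp]
    exact hsnoc.comp hswap
  funext p
  ext i
  refine Fin.lastCases ?_ (fun j => ?_) i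
  · simp [graphMk_last, MeasurableEquiv.piFinSuccAbove, Fin.insertNthEquiv]
  · simp [graphMk_castSucc, MeasurableEquiv.piFinSuccAbove, Fin.insertNthEquiv]

/-- The vertical distance from `x` up to the graph of `ℓ`. -/
def upperGap (ℓ : Esp d → ℝ) (x : Esp (d + 1)) : ℝ := ℓ (headProj d x) - lastProj d x

/-- The vertical distance from `x` down to the graph of `m`. -/
def lowerGap (m : Esp d → ℝ) (x : Esp (d + 1)) : ℝ := lastProj d x - m (headProj d x)

@[simp] lemma upperGap_graphMk (ℓ : Esp d → ℝ) (x' : Esp d) (s : ℝ) :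
    upperGap ℓ (graphMk d x' s) = ℓ x' - s := by
  simp [upperGap]

@[simp] lemma lowerGap_graphMk (m : Esp d → ℝ) (x' : Esp d) (s : ℝ) :
    lowerGap m (graphMk d x' s) = s - m x' := by
  simp [lowerGap]

lemma continuousOn_upperGap {ℓ : Esp d → ℝ} {s : Set (Esp d)} (hℓ : ContinuousOn ℓ s) :
    ContinuousOn (upperGap ℓ) (headProj d ⁻¹' s) :=
  (hℓ.comp (headProj d).continuous.continuousOn (mapsTo_preimage _ _)).sub
    (lastProj d).continuous.continuousOn

lemma continuousOn_lowerGap {m : Esp d → ℝ} {s : Set (Esp d)} (hm : ContinuousOn m s) :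
    ContinuousOn (lowerGap m) (headProj d ⁻¹' s) :=
  (lastProj d).continuous.continuousOn.sub
    (hm.comp (headProj d).continuous.continuousOn (mapsTo_preimage _ _))

variable {ρ₁ : ℝ} {ℓ ℓt : Esp d → ℝ}

lemma mem_graphDomain_iff {x : Esp (d + 1)} :
    x ∈ graphDomain d ρ₁ ℓ ℓt ↔ headProj d x ∈ ball 0 ρ₁ ∧
      0 < lowerGap (fun z => ℓ z - ℓt z) x ∧ 0 < upperGap ℓ x := by
  simp only [mem_ball_zero_iff, lowerGap, upperGap, sub_pos]
  constructor
  · rintro ⟨x', s, hx', hlower, hupper, rfl⟩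
    simpa using ⟨hx', hlower, hupper⟩
  · rintro ⟨hx', hlower, hupper⟩
    exact ⟨_, _, hx', hlower, hupper, (graphMk_headProj_lastProj x).symm⟩

lemma graphMk_mem_graphDomain_iff {x' : Esp d} {s : ℝ} :
    graphMk d x' s ∈ graphDomain d ρ₁ ℓ ℓt ↔ x' ∈ ball 0 ρ₁ ∧ s ∈ Ioo (ℓ x' - ℓt x') (ℓ x') := by
  simp [mem_graphDomain_iff]

/-- The closed region between the graphs, shrunk vertically by `c` at both graphs. -/
def shrunkRegion (d : ℕ) (ρ₁ : ℝ) (ℓ ℓt : Esp d → ℝ) (c : ℝ) : Set (Esp (d + 1)) :=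
  {x | headProj d x ∈ closedBall 0 ρ₁ ∧ c ≤ lowerGap (fun z => ℓ z - ℓt z) x ∧ c ≤ upperGap ℓ x}

/-- The graph domain is a `C¹` lens: its two graphs, of class `C¹` up to the boundary of the ball,
meet exactly over the bounding sphere. -/
structure IsGraphLens (ρ₁ : ℝ) (ℓ ℓt : Esp d → ℝ) : Prop where
  contDiffOn_upper : ContDiffOn ℝ 1 ℓ (closedBall 0 ρ₁)
  contDiffOn_height : ContDiffOn ℝ 1 ℓt (closedBall 0 ρ₁)
  height_pos : ∀ x' ∈ ball (0 : Esp d) ρ₁, 0 < ℓt x'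
  height_eq_zero : ∀ x' ∈ sphere (0 : Esp d) ρ₁, ℓt x' = 0

namespace IsGraphLens

lemma contDiffOn_lower (hG : IsGraphLens ρ₁ ℓ ℓt) :
    ContDiffOn ℝ 1 (fun z => ℓ z - ℓt z) (closedBall 0 ρ₁) :=
  hG.contDiffOn_upper.sub hG.contDiffOn_height

lemma lower_lt_upper (hG : IsGraphLens ρ₁ ℓ ℓt) {x' : Esp d} (hx' : x' ∈ ball 0 ρ₁) :
    ℓ x' - ℓt x' < ℓ x' :=
  sub_lt_self _ (hG.height_pos x' hx')

lemma continuousOn_gaps (hG : IsGraphLens ρ₁ ℓ ℓt) :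
    ContinuousOn (fun x => (lowerGap (fun z => ℓ z - ℓt z) x, upperGap ℓ x))
      (headProj d ⁻¹' closedBall 0 ρ₁) :=
  (continuousOn_lowerGap hG.contDiffOn_lower.continuousOn).prodMk
    (continuousOn_upperGap hG.contDiffOn_upper.continuousOn)

lemma isOpen (hG : IsGraphLens ρ₁ ℓ ℓt) : IsOpen (graphDomain d ρ₁ ℓ ℓt) := by
  have hcyl : IsOpen (headProj d ⁻¹' ball 0 ρ₁) := isOpen_ball.preimage (headProj d).continuous
  convert (hG.continuousOn_gaps.mono (preimage_mono ball_subset_closedBall)).isOpen_inter_preimage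
    hcyl ((isOpen_Ioi (a := (0 : ℝ))).prod (isOpen_Ioi (a := (0 : ℝ)))) using 1
  ext x
  exact mem_graphDomain_iff

lemma isClosed_shrunkRegion (hG : IsGraphLens ρ₁ ℓ ℓt) (c : ℝ) :
    IsClosed (shrunkRegion d ρ₁ ℓ ℓt c) :=
  hG.continuousOn_gaps.preimage_isClosed_of_isClosed
    (isClosed_closedBall.preimage (headProj d).continuous)
    ((isClosed_Ici (a := c)).prod (isClosed_Ici (a := c)))

lemma isCompact_shrunkRegion (hG : IsGraphLens ρ₁ ℓ ℓt) {c : ℝ} (hc : 0 ≤ c) :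
    IsCompact (shrunkRegion d ρ₁ ℓ ℓt c) := by
  obtain ⟨A, hA⟩ := (isCompact_closedBall _ _).exists_bound_of_continuousOn
    hG.contDiffOn_lower.continuousOn
  obtain ⟨B, hB⟩ := (isCompact_closedBall _ _).exists_bound_of_continuousOn
    hG.contDiffOn_upper.continuousOn
  have hbox : IsCompact ((fun p : Esp d × ℝ => graphMk d p.1 p.2) ''
      (closedBall 0 ρ₁ ×ˢ Icc (-A) B)) :=
    ((isCompact_closedBall _ _).prod isCompact_Icc).image continuous_graphMk
  refine hbox.of_isClosed_subset (hG.isClosed_shrunkRegion c) ?_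
  rintro x ⟨hx, hlower, hupper⟩
  refine ⟨(headProj d x, lastProj d x), ⟨hx, ?_, ?_⟩, graphMk_headProj_lastProj x⟩
  · linarith [neg_le_of_abs_le (hA _ hx), hlower.trans_eq (lowerGap.eq_1 _ x)]
  · linarith [le_of_abs_le (hB _ hx), hupper.trans_eq (upperGap.eq_1 _ x)]

lemma shrunkRegion_subset (hG : IsGraphLens ρ₁ ℓ ℓt) {c : ℝ} (hc : 0 < c) :
    shrunkRegion d ρ₁ ℓ ℓt c ⊆ graphDomain d ρ₁ ℓ ℓt := by
  rintro x ⟨hx, hlower, hupper⟩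
  refine mem_graphDomain_iff.2 ⟨?_, hc.trans_le hlower, hc.trans_le hupper⟩
  refine (ball_union_sphere.symm.subset hx).resolve_right fun hsphere => ?_
  have hheight := hG.height_eq_zero _ hsphere
  simp only [lowerGap, upperGap] at hlower hupper
  linarith

lemma closure_subset (hG : IsGraphLens ρ₁ ℓ ℓt) :
    closure (graphDomain d ρ₁ ℓ ℓt) ⊆ shrunkRegion d ρ₁ ℓ ℓt 0 :=
  closure_minimal (fun _ hx => (mem_graphDomain_iff.1 hx).imp (fun h => ball_subset_closedBall h)
    (And.imp le_of_lt le_of_lt)) (hG.isClosed_shrunkRegion 0)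

lemma isCompact_closure (hG : IsGraphLens ρ₁ ℓ ℓt) :
    IsCompact (closure (graphDomain d ρ₁ ℓ ℓt)) :=
  (hG.isCompact_shrunkRegion le_rfl).of_isClosed_subset isClosed_closure hG.closure_subset

lemma volume_lt_top (hG : IsGraphLens ρ₁ ℓ ℓt) : volume (graphDomain d ρ₁ ℓ ℓt) < ⊤ :=
  (measure_mono subset_closure).trans_lt hG.isCompact_closure.measure_lt_top

lemma integrableOn_of_continuousOn_closure (hG : IsGraphLens ρ₁ ℓ ℓt) {g : Esp (d + 1) → ℝ}
    (hg : ContinuousOn g (closure (graphDomain d ρ₁ ℓ ℓt))) :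
    IntegrableOn g (graphDomain d ρ₁ ℓ ℓt) :=
  (hg.integrableOn_compact hG.isCompact_closure).mono_set subset_closure

lemma graphMk_mem_closure (hG : IsGraphLens ρ₁ ℓ ℓt) {x' : Esp d} (hx' : x' ∈ ball 0 ρ₁) {s : ℝ}
    (hs : s ∈ Icc (ℓ x' - ℓt x') (ℓ x')) : graphMk d x' s ∈ closure (graphDomain d ρ₁ ℓ ℓt) := by
  have hmaps : MapsTo (graphMk d x') (Ioo (ℓ x' - ℓt x') (ℓ x')) (graphDomain d ρ₁ ℓ ℓt) :=
    fun s hs => graphMk_mem_graphDomain_iff.2 ⟨hx', hs⟩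
  refine hmaps.closure (continuous_graphMk.comp (Continuous.prodMk_right x')) ?_
  rwa [closure_Ioo (hG.lower_lt_upper hx').ne]

lemma upperGraph_mem_closure (hG : IsGraphLens ρ₁ ℓ ℓt) {x' : Esp d} (hx' : x' ∈ ball 0 ρ₁) :
    graphMk d x' (ℓ x') ∈ closure (graphDomain d ρ₁ ℓ ℓt) :=
  hG.graphMk_mem_closure hx' (right_mem_Icc.2 (hG.lower_lt_upper hx').le)

lemma integral_indicator_graphMk (hG : IsGraphLens ρ₁ ℓ ℓt) (h : Esp (d + 1) → ℝ) (x' : Esp d) :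
    ∫ s, (graphDomain d ρ₁ ℓ ℓt).indicator h (graphMk d x' s) =
      (ball (0 : Esp d) ρ₁).indicator
        (fun x' => ∫ s in (ℓ x' - ℓt x')..(ℓ x'), h (graphMk d x' s)) x' := by
  by_cases hx' : x' ∈ ball (0 : Esp d) ρ₁
  · rw [indicator_of_mem hx', intervalIntegral.integral_of_le (hG.lower_lt_upper hx').le,
      integral_Ioc_eq_integral_Ioo, ← integral_indicator measurableSet_Ioo]
    simp only [indicator, graphMk_mem_graphDomain_iff, hx', true_and]
  · simp [indicator, graphMk_mem_graphDomain_iff, mem_ball_zero_iff.not.1 hx']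

lemma integrable_indicator_graphMk (hG : IsGraphLens ρ₁ ℓ ℓt) {h : Esp (d + 1) → ℝ}
    (hh : IntegrableOn h (graphDomain d ρ₁ ℓ ℓt)) :
    Integrable (fun p : Esp d × ℝ => (graphDomain d ρ₁ ℓ ℓt).indicator h (graphMk d p.1 p.2))
      (volume.prod volume) :=
  (measurePreserving_graphMk.integrable_comp_emb measurableEmbedding_graphMk).2
    ((integrable_indicator_iff hG.isOpen.measurableSet).2 hh)

lemma integrableOn_integral_slice (hG : IsGraphLens ρ₁ ℓ ℓt) {h : Esp (d + 1) → ℝ}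
    (hh : IntegrableOn h (graphDomain d ρ₁ ℓ ℓt)) :
    IntegrableOn (fun x' => ∫ s in (ℓ x' - ℓt x')..(ℓ x'), h (graphMk d x' s)) (ball 0 ρ₁) := by
  rw [← integrable_indicator_iff measurableSet_ball]
  exact (hG.integrable_indicator_graphMk hh).integral_prod_left.congr
    (Eventually.of_forall fun x' => hG.integral_indicator_graphMk h x')

lemma setIntegral_eq_integral_slice (hG : IsGraphLens ρ₁ ℓ ℓt) {h : Esp (d + 1) → ℝ}
    (hh : IntegrableOn h (graphDomain d ρ₁ ℓ ℓt)) :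
    ∫ x in graphDomain d ρ₁ ℓ ℓt, h x
      = ∫ x' in ball (0 : Esp d) ρ₁, ∫ s in (ℓ x' - ℓt x')..(ℓ x'), h (graphMk d x' s) := by
  rw [← integral_indicator hG.isOpen.measurableSet, ← integral_indicator measurableSet_ball,
    ← measurePreserving_graphMk.integral_comp measurableEmbedding_graphMk,
    integral_prod _ (hG.integrable_indicator_graphMk hh)]
  simp only [hG.integral_indicator_graphMk]

end IsGraphLens

/-! ### The one-sided divergence theorem on a graph domain -/

section Gradient

variable {E : Type*} [NormedAddCommGroup E] [InnerProductSpace ℝ E] [CompleteSpace E]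

lemma norm_gradient_eq_norm_fderiv (m : E → ℝ) (x : E) : ‖gradient m x‖ = ‖fderiv ℝ m x‖ := by
  rw [gradient, LinearIsometryEquiv.norm_map]

lemma continuousOn_gradient {m : E → ℝ} {s : Set E} (hs : IsOpen s) (hm : ContDiffOn ℝ 1 m s) :
    ContinuousOn (gradient m) s :=
  (InnerProductSpace.toDual ℝ E).symm.continuous.comp_continuousOn
    (hm.continuousOn_fderiv_of_isOpen hs le_rfl)

end Gradient

/-- Near each point of `K` the derivative agrees on `interior K` with a continuous local choice of
the derivative on `K`; compactness makes the local bounds uniform. -/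
lemma exists_norm_fderiv_le {E F : Type*} [NormedAddCommGroup E] [NormedSpace ℝ E]
    [NormedAddCommGroup F] [NormedSpace ℝ F] {g : E → F} {K : Set E} (hK : IsCompact K)
    (hg : ContDiffOn ℝ 1 g K) : ∃ C, ∀ x ∈ interior K, ‖fderiv ℝ g x‖ ≤ C := by
  suffices hbound : ∃ C, ∀ x ∈ K ∩ interior K, ‖fderiv ℝ g x‖ ≤ C by
    simpa only [inter_eq_self_of_subset_right interior_subset] using hbound
  refine hK.induction_on (p := fun S => ∃ C, ∀ x ∈ S ∩ interior K, ‖fderiv ℝ g x‖ ≤ C)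
    ⟨0, by simp⟩ ?_ ?_ ?_
  · rintro s t hst ⟨C, hC⟩
    exact ⟨C, fun x hx => hC x ⟨hst hx.1, hx.2⟩⟩
  · rintro s t ⟨C, hC⟩ ⟨C', hC'⟩
    exact ⟨max C C', fun x hx => hx.1.elim (fun hs => (hC x ⟨hs, hx.2⟩).trans (le_max_left _ _))
      fun ht => (hC' x ⟨ht, hx.2⟩).trans (le_max_right _ _)⟩
  · intro q hq
    have hdiff : ContDiffWithinAt ℝ (0 + 1) g K q := by simpa using hg q hq
    obtain ⟨u, hu, -, -, g', hg', hcont⟩ :=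
      (contDiffWithinAt_succ_iff_hasFDerivWithinAt' (by simp)).1 hdiff
    rw [insert_eq_of_mem hq] at hu
    have hlt : ∀ᶠ z in 𝓝[K] q, ‖g' z‖ < ‖g' q‖ + 1 :=
      hcont.continuousWithinAt.norm.eventually (gt_mem_nhds (lt_add_one _))
    refine ⟨_, inter_mem hu hlt, ‖g' q‖ + 1, fun z hz => ?_⟩
    rw [((hg' z hz.1.1).hasFDerivAt (mem_interior_iff_mem_nhds.1 hz.2)).fderiv]
    exact le_of_lt hz.1.2

lemma norm_graphMk_neg_gradient (m : Esp d → ℝ) (x' : Esp d) :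
    ‖graphMk d (-gradient m x') 1‖ = omegaW d m x' := by
  rw [norm_graphMk, norm_neg, one_pow, omegaW]

lemma exists_omegaW_le {m : Esp d → ℝ} (hm : ContDiffOn ℝ 1 m (closedBall 0 ρ₁)) :
    ∃ C, ∀ x' ∈ ball (0 : Esp d) ρ₁, omegaW d m x' ≤ C := by
  obtain ⟨C, hC⟩ := exists_norm_fderiv_le (isCompact_closedBall _ _) hm
  refine ⟨√(1 + C ^ 2), fun x' hx' => Real.sqrt_le_sqrt ?_⟩
  rw [norm_gradient_eq_norm_fderiv]
  gcongr
  exact hC x' (ball_subset_interior_closedBall hx')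

/-- The density, in the horizontal variable, of the flux of `F` through the vertical translates of
the graph of `m`, oriented upwards. It is the inner product with the unnormalized normal
`(-∇m, 1)`, so that the area element is included. -/
def upwardFlux (m : Esp d → ℝ) (F : Esp (d + 1) → Esp (d + 1)) (x : Esp (d + 1)) : ℝ :=
  ⟪F x, graphMk d (-gradient m (headProj d x)) 1⟫

lemma abs_upwardFlux_le (m : Esp d → ℝ) (F : Esp (d + 1) → Esp (d + 1)) (x : Esp (d + 1)) :
    |upwardFlux m F x| ≤ ‖F x‖ * omegaW d m (headProj d x) :=
  (abs_real_inner_le_norm _ _).trans_eq (by rw [norm_graphMk_neg_gradient])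

/-- The graph domain together with its two graphs, but without the edge where they meet. The
gradients of the graph functions are only controlled on this part of the closure. -/
def graphDomainWithFaces (d : ℕ) (ρ₁ : ℝ) (ℓ ℓt : Esp d → ℝ) : Set (Esp (d + 1)) :=
  {x | headProj d x ∈ ball 0 ρ₁ ∧ 0 ≤ lowerGap (fun z => ℓ z - ℓt z) x ∧ 0 ≤ upperGap ℓ x}

lemma graphDomain_subset_graphDomainWithFaces :
    graphDomain d ρ₁ ℓ ℓt ⊆ graphDomainWithFaces d ρ₁ ℓ ℓt :=
  fun _ hx => (mem_graphDomain_iff.1 hx).imp_right (And.imp le_of_lt le_of_lt)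

lemma graphMk_mem_graphDomainWithFaces {x' : Esp d} (hx' : x' ∈ ball 0 ρ₁) {s : ℝ}
    (hs : s ∈ Icc (ℓ x' - ℓt x') (ℓ x')) : graphMk d x' s ∈ graphDomainWithFaces d ρ₁ ℓ ℓt := by
  simpa [graphDomainWithFaces, -sub_nonneg] using
    ⟨mem_ball_zero_iff.1 hx', sub_nonneg.2 hs.1, sub_nonneg.2 hs.2⟩

lemma continuousOn_slice {F : Type*} [TopologicalSpace F] {g : Esp (d + 1) → F}
    (hg : ContinuousOn g (graphDomainWithFaces d ρ₁ ℓ ℓt)) {x' : Esp d} (hx' : x' ∈ ball 0 ρ₁) :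
    ContinuousOn (fun s => g (graphMk d x' s)) (Icc (ℓ x' - ℓt x') (ℓ x')) :=
  hg.comp (continuous_graphMk.comp (Continuous.prodMk_right x')).continuousOn
    fun _ hs => graphMk_mem_graphDomainWithFaces hx' hs

/-- A smooth interior cutoff at vertical distance `1 / k` from the graphs of `ℓ` and `m`. -/
def domainCutoff (ℓ m : Esp d → ℝ) (k : ℝ) (x : Esp (d + 1)) : ℝ :=
  cutoff (k * upperGap ℓ x) * cutoff (k * lowerGap m x)

lemma domainCutoff_nonneg (ℓ m : Esp d → ℝ) (k : ℝ) (x : Esp (d + 1)) :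
    0 ≤ domainCutoff ℓ m k x :=
  mul_nonneg (cutoff_nonneg _) (cutoff_nonneg _)

lemma abs_domainCutoff_le_one (ℓ m : Esp d → ℝ) (k : ℝ) (x : Esp (d + 1)) :
    |domainCutoff ℓ m k x| ≤ 1 := by
  rw [abs_of_nonneg (domainCutoff_nonneg ..)]
  exact mul_le_one₀ (cutoff_le_one _) (cutoff_nonneg _) (cutoff_le_one _)

lemma domainCutoff_eq_zero_of_notMem_shrunkRegion {k : ℝ} (hk : 0 < k) {x : Esp (d + 1)}
    (hx : headProj d x ∈ closedBall 0 ρ₁) (hxS : x ∉ shrunkRegion d ρ₁ ℓ ℓt k⁻¹) :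
    domainCutoff ℓ (fun z => ℓ z - ℓt z) k x = 0 := by
  contrapose! hxS
  have hge {r : ℝ} (hr : cutoff (k * r) ≠ 0) : k⁻¹ ≤ r := by
    contrapose! hr
    exact cutoff_of_le (((lt_inv_mul_iff₀ hk).1 (by simpa using hr)).le)
  exact ⟨hx, hge (right_ne_zero_of_mul hxS), hge (left_ne_zero_of_mul hxS)⟩

lemma tendsto_domainCutoff {m : Esp d → ℝ} {x : Esp (d + 1)} (hlower : 0 < lowerGap m x)
    (hupper : 0 < upperGap ℓ x) :
    Tendsto (fun k : ℕ => domainCutoff ℓ m k x) atTop (𝓝 1) := by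
  have hlarge {r : ℝ} (hr : 0 < r) : ∀ᶠ k : ℕ in atTop, 2 ≤ (k : ℝ) * r :=
    (tendsto_natCast_atTop_atTop.atTop_mul_const hr).eventually_ge_atTop 2
  refine tendsto_const_nhds.congr' ?_
  filter_upwards [hlarge hlower, hlarge hupper] with k hklower hkupper
  rw [domainCutoff, cutoff_of_ge hkupper, cutoff_of_ge hklower, one_mul]

lemma fderiv_domainCutoff_apply {ℓ m : Esp d → ℝ} {x : Esp (d + 1)}
    (hℓ : DifferentiableAt ℝ ℓ (headProj d x)) (hm : DifferentiableAt ℝ m (headProj d x)) (k : ℝ)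
    (F : Esp (d + 1) → Esp (d + 1)) :
    fderiv ℝ (domainCutoff ℓ m k) x (F x) =
      boundaryLayer k (lowerGap m x) (upperGap ℓ x) * upwardFlux m F x
        - boundaryLayer k (upperGap ℓ x) (lowerGap m x) * upwardFlux ℓ F x := by
  have hupper : HasFDerivAt (fun x => k * upperGap ℓ x)
      (k • ((fderiv ℝ ℓ (headProj d x)).comp (headProj d) - lastProj d)) x :=
    ((hℓ.hasFDerivAt.comp x (headProj d).hasFDerivAt).sub (lastProj d).hasFDerivAt).const_mul k
  have hlower : HasFDerivAt (fun x => k * lowerGap m x)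
      (k • (lastProj d - (fderiv ℝ m (headProj d x)).comp (headProj d))) x :=
    ((lastProj d).hasFDerivAt.sub (hm.hasFDerivAt.comp x (headProj d).hasFDerivAt)).const_mul k
  have hprod : HasFDerivAt (domainCutoff ℓ m k) _ x :=
    ((hasDerivAt_cutoff _).comp_hasFDerivAt x hupper).mul
      ((hasDerivAt_cutoff _).comp_hasFDerivAt x hlower)
  rw [hprod.fderiv]
  simp only [upwardFlux, inner_graphMk, inner_neg_right, inner_gradient_right, boundaryLayer,
    add_apply, smul_apply, sub_apply, ContinuousLinearMap.comp_apply, smul_eq_mul,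
    Function.comp_apply, conj_trivial]
  ring

lemma differentiableAt_comp_headProj {m : Esp d → ℝ} (hm : ContDiffOn ℝ 1 m (closedBall 0 ρ₁))
    {x : Esp (d + 1)} (hx : x ∈ graphDomain d ρ₁ ℓ ℓt) : DifferentiableAt ℝ m (headProj d x) :=
  (hm.differentiableOn one_ne_zero).differentiableAt
    (mem_of_superset (isOpen_ball.mem_nhds (mem_graphDomain_iff.1 hx).1) ball_subset_closedBall)

namespace IsGraphLens

lemma graphDomainWithFaces_subset_closure (hG : IsGraphLens ρ₁ ℓ ℓt) :
    graphDomainWithFaces d ρ₁ ℓ ℓt ⊆ closure (graphDomain d ρ₁ ℓ ℓt) := fun x hx => by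
  rw [← graphMk_headProj_lastProj x]
  exact hG.graphMk_mem_closure hx.1 ⟨sub_nonneg.1 hx.2.1, sub_nonneg.1 hx.2.2⟩

lemma continuousOn_upwardFlux (hG : IsGraphLens ρ₁ ℓ ℓt) {m : Esp d → ℝ}
    (hm : ContDiffOn ℝ 1 m (closedBall 0 ρ₁)) {F : Esp (d + 1) → Esp (d + 1)}
    (hF : ContinuousOn F (closure (graphDomain d ρ₁ ℓ ℓt))) :
    ContinuousOn (upwardFlux m F) (graphDomainWithFaces d ρ₁ ℓ ℓt) := by
  have hgrad : ContinuousOn (fun x => gradient m (headProj d x))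
      (graphDomainWithFaces d ρ₁ ℓ ℓt) :=
    (continuousOn_gradient isOpen_ball (hm.mono ball_subset_closedBall)).comp
      (headProj d).continuous.continuousOn fun x hx => hx.1
  exact (hF.mono hG.graphDomainWithFaces_subset_closure).inner
    (continuous_graphMk.comp_continuousOn (hgrad.neg.prodMk continuousOn_const))

lemma exists_abs_upwardFlux_le (hG : IsGraphLens ρ₁ ℓ ℓt) {m : Esp d → ℝ}
    (hm : ContDiffOn ℝ 1 m (closedBall 0 ρ₁)) {F : Esp (d + 1) → Esp (d + 1)}
    (hF : ContinuousOn F (closure (graphDomain d ρ₁ ℓ ℓt))) :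
    ∃ C, ∀ x ∈ graphDomainWithFaces d ρ₁ ℓ ℓt, |upwardFlux m F x| ≤ C := by
  obtain ⟨A, hA⟩ := hG.isCompact_closure.exists_bound_of_continuousOn hF
  obtain ⟨B, hB⟩ := exists_omegaW_le hm
  refine ⟨A * B, fun x hx => (abs_upwardFlux_le m F x).trans ?_⟩
  have hFx := hA x (hG.graphDomainWithFaces_subset_closure hx)
  exact mul_le_mul hFx (hB _ hx.1) (Real.sqrt_nonneg _) ((norm_nonneg _).trans hFx)

lemma integrableOn_boundaryLayer_mul (hG : IsGraphLens ρ₁ ℓ ℓt) {a b g : Esp (d + 1) → ℝ}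
    (ha : ContinuousOn a (closure (graphDomain d ρ₁ ℓ ℓt)))
    (hb : ContinuousOn b (closure (graphDomain d ρ₁ ℓ ℓt)))
    (hg : ContinuousOn g (graphDomainWithFaces d ρ₁ ℓ ℓt)) {C : ℝ}
    (hC : ∀ x ∈ graphDomainWithFaces d ρ₁ ℓ ℓt, |g x| ≤ C) (k : ℝ) :
    IntegrableOn (fun x => boundaryLayer k (a x) (b x) * g x) (graphDomain d ρ₁ ℓ ℓt) := by
  refine Integrable.mul_bdd (c := C) (hG.integrableOn_of_continuousOn_closure
    ((continuous_boundaryLayer k).comp_continuousOn (ha.prodMk hb))) ?_ ?_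
  · exact (hg.mono graphDomain_subset_graphDomainWithFaces).aestronglyMeasurable
      hG.isOpen.measurableSet
  · exact ae_restrict_of_forall_mem hG.isOpen.measurableSet
      fun x hx => hC x (graphDomain_subset_graphDomainWithFaces hx)

lemma continuousOn_upperGap_closure (hG : IsGraphLens ρ₁ ℓ ℓt) :
    ContinuousOn (upperGap ℓ) (closure (graphDomain d ρ₁ ℓ ℓt)) :=
  (continuousOn_upperGap hG.contDiffOn_upper.continuousOn).mono
    fun _ hx => (hG.closure_subset hx).1

lemma continuousOn_lowerGap_closure (hG : IsGraphLens ρ₁ ℓ ℓt) :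
    ContinuousOn (lowerGap fun z => ℓ z - ℓt z) (closure (graphDomain d ρ₁ ℓ ℓt)) :=
  (continuousOn_lowerGap hG.contDiffOn_lower.continuousOn).mono
    fun _ hx => (hG.closure_subset hx).1

lemma tendsto_setIntegral_of_slices (hG : IsGraphLens ρ₁ ℓ ℓt) {g : ℕ → Esp (d + 1) → ℝ}
    (hg : ∀ k, IntegrableOn (g k) (graphDomain d ρ₁ ℓ ℓt)) {C : ℝ} {b : Esp d → ℝ}
    (hC : ∀ k, ∀ x' ∈ ball (0 : Esp d) ρ₁,
      |∫ s in (ℓ x' - ℓt x')..(ℓ x'), g k (graphMk d x' s)| ≤ C)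
    (hlim : ∀ x' ∈ ball (0 : Esp d) ρ₁, Tendsto
      (fun k => ∫ s in (ℓ x' - ℓt x')..(ℓ x'), g k (graphMk d x' s)) atTop (𝓝 (b x'))) :
    Tendsto (fun k => ∫ x in graphDomain d ρ₁ ℓ ℓt, g k x) atTop
      (𝓝 (∫ x' in ball (0 : Esp d) ρ₁, b x')) := by
  simp_rw [fun k => hG.setIntegral_eq_integral_slice (hg k)]
  exact tendsto_integral_of_dominated_convergence (fun _ => C)
    (fun k => (hG.integrableOn_integral_slice (hg k)).aestronglyMeasurable)
    (integrableOn_const measure_ball_lt_top.ne)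
    (fun k => ae_restrict_of_forall_mem measurableSet_ball (hC k))
    (ae_restrict_of_forall_mem measurableSet_ball hlim)

lemma tendsto_setIntegral_upperLayer_mul (hG : IsGraphLens ρ₁ ℓ ℓt) {g : Esp (d + 1) → ℝ}
    (hg : ContinuousOn g (graphDomainWithFaces d ρ₁ ℓ ℓt)) {C : ℝ}
    (hC : ∀ x ∈ graphDomainWithFaces d ρ₁ ℓ ℓt, |g x| ≤ C) :
    Tendsto (fun k : ℕ => ∫ x in graphDomain d ρ₁ ℓ ℓt,
        boundaryLayer k (upperGap ℓ x) (lowerGap (fun z => ℓ z - ℓt z) x) * g x) atTop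
      (𝓝 (∫ x' in ball (0 : Esp d) ρ₁, g (graphMk d x' (ℓ x')))) := by
  refine hG.tendsto_setIntegral_of_slices (C := C) (fun k => hG.integrableOn_boundaryLayer_mul
    hG.continuousOn_upperGap_closure hG.continuousOn_lowerGap_closure hg hC k)
    (fun k x' hx' => ?_) fun x' hx' => ?_
  all_goals simp only [upperGap_graphMk, lowerGap_graphMk]
  · exact abs_integral_boundaryLayer_right_le (hG.lower_lt_upper hx').le k.cast_nonneg
      fun s hs => hC _ (graphMk_mem_graphDomainWithFaces hx' hs)
  · exact tendsto_integral_boundaryLayer_right (hG.lower_lt_upper hx') (continuousOn_slice hg hx')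

lemma tendsto_setIntegral_lowerLayer_mul (hG : IsGraphLens ρ₁ ℓ ℓt) {g : Esp (d + 1) → ℝ}
    (hg : ContinuousOn g (graphDomainWithFaces d ρ₁ ℓ ℓt)) {C : ℝ}
    (hC : ∀ x ∈ graphDomainWithFaces d ρ₁ ℓ ℓt, |g x| ≤ C) :
    Tendsto (fun k : ℕ => ∫ x in graphDomain d ρ₁ ℓ ℓt,
        boundaryLayer k (lowerGap (fun z => ℓ z - ℓt z) x) (upperGap ℓ x) * g x) atTop
      (𝓝 (∫ x' in ball (0 : Esp d) ρ₁, g (graphMk d x' (ℓ x' - ℓt x')))) := by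
  refine hG.tendsto_setIntegral_of_slices (C := C) (fun k => hG.integrableOn_boundaryLayer_mul
    hG.continuousOn_lowerGap_closure hG.continuousOn_upperGap_closure hg hC k)
    (fun k x' hx' => ?_) fun x' hx' => ?_
  all_goals simp only [upperGap_graphMk, lowerGap_graphMk]
  · exact abs_integral_boundaryLayer_left_le (hG.lower_lt_upper hx').le k.cast_nonneg
      fun s hs => hC _ (graphMk_mem_graphDomainWithFaces hx' hs)
  · exact tendsto_integral_boundaryLayer_left (hG.lower_lt_upper hx') (continuousOn_slice hg hx')

lemma contDiffOn_domainCutoff (hG : IsGraphLens ρ₁ ℓ ℓt) (k : ℝ) :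
    ContDiffOn ℝ 1 (domainCutoff ℓ (fun z => ℓ z - ℓt z) k) (graphDomain d ρ₁ ℓ ℓt) := by
  have hmaps : MapsTo (headProj d) (graphDomain d ρ₁ ℓ ℓt) (closedBall 0 ρ₁) :=
    fun x hx => ball_subset_closedBall (mem_graphDomain_iff.1 hx).1
  have hcomp {m : Esp d → ℝ} (hm : ContDiffOn ℝ 1 m (closedBall 0 ρ₁)) :
      ContDiffOn ℝ 1 (fun x => m (headProj d x)) (graphDomain d ρ₁ ℓ ℓt) :=
    hm.comp (headProj d).contDiff.contDiffOn hmaps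
  have hlast : ContDiffOn ℝ 1 (lastProj d) (graphDomain d ρ₁ ℓ ℓt) :=
    (lastProj d).contDiff.contDiffOn
  exact (contDiff_cutoff.comp_contDiffOn
      (contDiffOn_const.mul ((hcomp hG.contDiffOn_upper).sub hlast))).mul
    (contDiff_cutoff.comp_contDiffOn
      (contDiffOn_const.mul (hlast.sub (hcomp hG.contDiffOn_lower))))

lemma integrableOn_domainCutoff_mul (hG : IsGraphLens ρ₁ ℓ ℓt) {L : Esp (d + 1) → ℝ}
    (hL : IntegrableOn L (graphDomain d ρ₁ ℓ ℓt)) (k : ℝ) :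
    IntegrableOn (fun x => domainCutoff ℓ (fun z => ℓ z - ℓt z) k x * L x)
      (graphDomain d ρ₁ ℓ ℓt) :=
  Integrable.bdd_mul (c := 1) hL
    ((hG.contDiffOn_domainCutoff k).continuousOn.aestronglyMeasurable hG.isOpen.measurableSet)
    (Eventually.of_forall fun x => abs_domainCutoff_le_one _ _ k x)

lemma tendsto_setIntegral_domainCutoff_mul (hG : IsGraphLens ρ₁ ℓ ℓt) {L : Esp (d + 1) → ℝ}
    (hL : IntegrableOn L (graphDomain d ρ₁ ℓ ℓt)) :
    Tendsto (fun k : ℕ => ∫ x in graphDomain d ρ₁ ℓ ℓt,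
        domainCutoff ℓ (fun z => ℓ z - ℓt z) k x * L x) atTop
      (𝓝 (∫ x in graphDomain d ρ₁ ℓ ℓt, L x)) := by
  refine tendsto_integral_of_dominated_convergence (fun x => |L x|)
    (fun k => (hG.integrableOn_domainCutoff_mul hL k).aestronglyMeasurable) hL.abs
    (fun k => Eventually.of_forall fun x => ?_)
    (ae_restrict_of_forall_mem hG.isOpen.measurableSet fun x hx => ?_)
  · rw [Real.norm_eq_abs, abs_mul]
    exact mul_le_of_le_one_left (abs_nonneg _) (abs_domainCutoff_le_one ..)
  · obtain ⟨-, hlower, hupper⟩ := mem_graphDomain_iff.1 hx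
    simpa using (tendsto_domainCutoff hlower hupper).mul_const (L x)

lemma setIntegral_domainCutoff_mul_le (hG : IsGraphLens ρ₁ ℓ ℓt)
    {F : Esp (d + 1) → Esp (d + 1)} {L : Esp (d + 1) → ℝ}
    (hF : ContinuousOn F (closure (graphDomain d ρ₁ ℓ ℓt)))
    (hF' : ContDiffOn ℝ 1 F (graphDomain d ρ₁ ℓ ℓt))
    (hL : IntegrableOn L (graphDomain d ρ₁ ℓ ℓt))
    (hLF : ∀ x ∈ graphDomain d ρ₁ ℓ ℓt, L x ≤ divergence F x) {k : ℝ} (hk : 0 < k) :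
    ∫ x in graphDomain d ρ₁ ℓ ℓt, domainCutoff ℓ (fun z => ℓ z - ℓt z) k x * L x ≤
      (∫ x in graphDomain d ρ₁ ℓ ℓt,
        boundaryLayer k (upperGap ℓ x) (lowerGap (fun z => ℓ z - ℓt z) x) * upwardFlux ℓ F x)
      - ∫ x in graphDomain d ρ₁ ℓ ℓt,
        boundaryLayer k (lowerGap (fun z => ℓ z - ℓt z) x) (upperGap ℓ x) *
          upwardFlux (fun z => ℓ z - ℓt z) F x := by
  obtain ⟨A, hA⟩ := hG.exists_abs_upwardFlux_le hG.contDiffOn_upper hF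
  obtain ⟨B, hB⟩ := hG.exists_abs_upwardFlux_le hG.contDiffOn_lower hF
  have hupper := hG.integrableOn_boundaryLayer_mul hG.continuousOn_upperGap_closure
    hG.continuousOn_lowerGap_closure (hG.continuousOn_upwardFlux hG.contDiffOn_upper hF) hA k
  have hlower := hG.integrableOn_boundaryLayer_mul hG.continuousOn_lowerGap_closure
    hG.continuousOn_upperGap_closure (hG.continuousOn_upwardFlux hG.contDiffOn_lower hF) hB k
  have hcut := hG.integrableOn_domainCutoff_mul hL k
  obtain ⟨hdiv, hzero⟩ := setIntegral_divergence_eq_zero hG.isOpen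
    (hG.isCompact_shrunkRegion (inv_pos.2 hk).le) (hG.shrunkRegion_subset (inv_pos.2 hk))
    ((hG.contDiffOn_domainCutoff k).smul hF') fun x hx => by
      rw [Pi.smul_apply', domainCutoff_eq_zero_of_notMem_shrunkRegion hk
        (ball_subset_closedBall (mem_graphDomain_iff.1 hx.1).1) hx.2, zero_smul]
  have hmono := setIntegral_mono_on (hcut.add (hlower.sub hupper)) hdiv hG.isOpen.measurableSet
    fun x hx => by
      rw [divergence_smul
        (((hG.contDiffOn_domainCutoff k).contDiffAt (hG.isOpen.mem_nhds hx)).differentiableAt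
          one_ne_zero) ((hF'.contDiffAt (hG.isOpen.mem_nhds hx)).differentiableAt one_ne_zero),
        fderiv_domainCutoff_apply (differentiableAt_comp_headProj hG.contDiffOn_upper hx)
          (differentiableAt_comp_headProj hG.contDiffOn_lower hx)]
      exact add_le_add_left
        (mul_le_mul_of_nonneg_left (hLF x hx) (domainCutoff_nonneg _ _ k x)) _
  rw [integral_add' hcut (hlower.sub hupper), integral_sub' hlower hupper, hzero] at hmono
  linarith

/-- The inequality is one-sided because `divergence F` may fail to be integrable up to the
boundary. -/
theorem setIntegral_le_of_le_divergence (hG : IsGraphLens ρ₁ ℓ ℓt)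
    {F : Esp (d + 1) → Esp (d + 1)} {L : Esp (d + 1) → ℝ}
    (hF : ContinuousOn F (closure (graphDomain d ρ₁ ℓ ℓt)))
    (hF' : ContDiffOn ℝ 1 F (graphDomain d ρ₁ ℓ ℓt))
    (hL : IntegrableOn L (graphDomain d ρ₁ ℓ ℓt))
    (hLF : ∀ x ∈ graphDomain d ρ₁ ℓ ℓt, L x ≤ divergence F x) :
    ∫ x in graphDomain d ρ₁ ℓ ℓt, L x ≤
      (∫ x' in ball (0 : Esp d) ρ₁, upwardFlux ℓ F (graphMk d x' (ℓ x')))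
      - ∫ x' in ball (0 : Esp d) ρ₁,
        upwardFlux (fun z => ℓ z - ℓt z) F (graphMk d x' (ℓ x' - ℓt x')) := by
  obtain ⟨A, hA⟩ := hG.exists_abs_upwardFlux_le hG.contDiffOn_upper hF
  obtain ⟨B, hB⟩ := hG.exists_abs_upwardFlux_le hG.contDiffOn_lower hF
  refine le_of_tendsto_of_tendsto (hG.tendsto_setIntegral_domainCutoff_mul hL)
    ((hG.tendsto_setIntegral_upperLayer_mul
        (hG.continuousOn_upwardFlux hG.contDiffOn_upper hF) hA).sub
      (hG.tendsto_setIntegral_lowerLayer_mul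
        (hG.continuousOn_upwardFlux hG.contDiffOn_lower hF) hB)) ?_
  filter_upwards [eventually_gt_atTop 0] with k hk
  exact hG.setIntegral_domainCutoff_mul_le hF hF' hL hLF (Nat.cast_pos.2 hk)

end IsGraphLens

/-! ### Transport equations on a compact time interval -/

lemma continuousOn_intervalIntegral {X F : Type*} [TopologicalSpace X] [NormedAddCommGroup F]
    [NormedSpace ℝ F] {a b : ℝ} (hab : a ≤ b) {A : Set X} {G : X → ℝ → F}
    (hG : ContinuousOn (Function.uncurry G) (A ×ˢ Icc a b)) :
    ContinuousOn (fun x => ∫ t in a..b, G x t) A := by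
  rw [continuousOn_iff_continuous_domRestrict]
  have hproj : Continuous (Function.uncurry fun (x : A) (t : ℝ) => G x (projIcc a b hab t)) :=
    hG.comp_continuous (f := fun p : A × ℝ => ((p.1 : X), (projIcc a b hab p.2 : ℝ)))
      (by fun_prop) fun p => ⟨p.1.2, (projIcc a b hab p.2).2⟩
  refine (intervalIntegral.continuous_parametric_intervalIntegral_of_continuous'
    (μ := volume) hproj a b).congr fun x => intervalIntegral.integral_congr fun t ht => ?_
  rw [uIcc_of_le hab] at ht
  simp only [projIcc_of_mem hab ht]

section TimeDerivative

variable {E F : Type*} [NormedAddCommGroup E] [NormedSpace ℝ E] [NormedAddCommGroup F]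
  [NormedSpace ℝ F] {T : ℝ} {A D : Set E} {Y : E → ℝ → F} {x : E} {t : ℝ}

/-- The partial derivative in time on `[0, T]`, one-sided at the endpoints. -/
def timeDeriv (T : ℝ) (Y : E → ℝ → F) (x : E) (t : ℝ) : F := derivWithin (Y x) (Icc 0 T) t

lemma hasDerivWithinAt_of_hasFDerivWithinAt_uncurry {Y' : E × ℝ →L[ℝ] F} (hx : x ∈ A)
    (hY : HasFDerivWithinAt (Function.uncurry Y) Y' (A ×ˢ Icc 0 T) (x, t)) :
    HasDerivWithinAt (Y x) (Y' (0, 1)) (Icc 0 T) t :=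
  hY.comp_hasDerivWithinAt t ((hasDerivWithinAt_const t _ x).prodMk (hasDerivWithinAt_id t _))
    fun _ hτ => ⟨hx, hτ⟩

lemma hasDerivWithinAt_timeDeriv (hY : ContDiffOn ℝ 1 (Function.uncurry Y) (A ×ˢ Icc 0 T))
    (hx : x ∈ A) (ht : t ∈ Icc 0 T) :
    HasDerivWithinAt (Y x) (timeDeriv T Y x t) (Icc 0 T) t :=
  (hasDerivWithinAt_of_hasFDerivWithinAt_uncurry hx (hY.differentiableOn one_ne_zero (x, t)
    ⟨hx, ht⟩).hasFDerivWithinAt).differentiableWithinAt.hasDerivWithinAt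

lemma hasDerivAt_timeDeriv (hY : ContDiffOn ℝ 1 (Function.uncurry Y) (A ×ˢ Icc 0 T))
    (hx : x ∈ A) (ht : t ∈ Ioo 0 T) : HasDerivAt (Y x) (timeDeriv T Y x t) t :=
  (hasDerivWithinAt_timeDeriv hY hx (Ioo_subset_Icc_self ht)).hasDerivAt (Icc_mem_nhds ht.1 ht.2)

/-- `[0, T]` determines derivatives in time, whatever `A` is, so the time derivative is the value in
direction `(0, 1)` of any continuous local choice of the full derivative. -/
lemma continuousOn_timeDeriv (hT : 0 < T)
    (hY : ContDiffOn ℝ 1 (Function.uncurry Y) (A ×ˢ Icc 0 T)) :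
    ContinuousOn (Function.uncurry (timeDeriv T Y)) (A ×ˢ Icc 0 T) := by
  intro q hq
  have hdiff : ContDiffWithinAt ℝ (0 + 1) (Function.uncurry Y) (A ×ˢ Icc 0 T) q := by
    simpa using hY q hq
  obtain ⟨u, hu, -, -, Y', hY', hcont⟩ :=
    (contDiffWithinAt_succ_iff_hasFDerivWithinAt' (by simp)).1 hdiff
  rw [insert_eq_of_mem hq] at hu
  have heq : ∀ z ∈ u, z ∈ A ×ˢ Icc 0 T → Function.uncurry (timeDeriv T Y) z = Y' z (0, 1) :=
    fun z hz hzA => (hasDerivWithinAt_of_hasFDerivWithinAt_uncurry hzA.1 (hY' z hz)).derivWithin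
      (uniqueDiffOn_Icc hT _ hzA.2)
  refine (hcont.continuousWithinAt.clm_apply
    (continuousWithinAt_const (b := ((0 : E), (1 : ℝ))))).congr_of_eventuallyEq ?_
    (heq q (mem_of_mem_nhdsWithin hq hu) hq)
  filter_upwards [hu, self_mem_nhdsWithin] with z hz hzA using heq z hz hzA

lemma uniqueDiffOn_prod_Icc (hT : 0 < T) (hD : IsOpen D) : UniqueDiffOn ℝ (D ×ˢ Icc 0 T) :=
  hD.uniqueDiffOn.prod (uniqueDiffOn_Icc hT)

lemma fderivWithin_uncurry_apply_zero_one (hT : 0 < T)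
    (hY : ContDiffOn ℝ 1 (Function.uncurry Y) (D ×ˢ Icc 0 T)) (hx : x ∈ D) (ht : t ∈ Icc 0 T) :
    fderivWithin ℝ (Function.uncurry Y) (D ×ˢ Icc 0 T) (x, t) (0, 1) = timeDeriv T Y x t :=
  ((hasDerivWithinAt_of_hasFDerivWithinAt_uncurry hx (hY.differentiableOn one_ne_zero (x, t)
    ⟨hx, ht⟩).hasFDerivWithinAt).derivWithin (uniqueDiffOn_Icc hT _ ht)).symm

lemma hasFDerivAt_of_contDiffOn_uncurry (hD : IsOpen D)
    (hY : ContDiffOn ℝ 1 (Function.uncurry Y) (D ×ˢ Icc 0 T)) (hx : x ∈ D) (ht : t ∈ Icc 0 T) :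
    HasFDerivAt (fun z => Y z t) ((fderivWithin ℝ (Function.uncurry Y) (D ×ˢ Icc 0 T) (x, t)).comp
      (ContinuousLinearMap.inl ℝ E ℝ)) x := by
  have hmaps : MapsTo (fun z => (z, t)) D (D ×ˢ Icc 0 T) := fun _ hz => ⟨hz, ht⟩
  exact ((hY.differentiableOn one_ne_zero (x, t) ⟨hx, ht⟩).hasFDerivWithinAt.comp x
    (hasFDerivAt_prodMk_left x t).hasFDerivWithinAt hmaps).hasFDerivAt (hD.mem_nhds hx)

lemma fderivWithin_uncurry_apply_one (hT : 0 < T) (hD : IsOpen D)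
    (hY : ContDiffOn ℝ 1 (Function.uncurry Y) (D ×ˢ Icc 0 T)) (hx : x ∈ D) (ht : t ∈ Icc 0 T)
    (v : E) : fderivWithin ℝ (Function.uncurry Y) (D ×ˢ Icc 0 T) (x, t) (v, 1)
      = timeDeriv T Y x t + fderiv ℝ (fun z => Y z t) x v := by
  rw [← fderivWithin_uncurry_apply_zero_one hT hY hx ht,
    (hasFDerivAt_of_contDiffOn_uncurry hD hY hx ht).fderiv, ContinuousLinearMap.comp_apply,
    ContinuousLinearMap.inl_apply, ← map_add]
  simp

lemma fderiv_uncurry_apply_one (hT : 0 < T) (hD : IsOpen D)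
    (hY : ContDiffOn ℝ 1 (Function.uncurry Y) (D ×ˢ Icc 0 T)) (hx : x ∈ D) (ht : t ∈ Ioo 0 T)
    (v : E) : fderiv ℝ (Function.uncurry Y) (x, t) (v, 1)
      = timeDeriv T Y x t + fderiv ℝ (fun z => Y z t) x v := by
  rw [← fderivWithin_uncurry_apply_one hT hD hY hx (Ioo_subset_Icc_self ht),
    fderivWithin_of_mem_nhds (prod_mem_nhds (hD.mem_nhds hx) (Icc_mem_nhds ht.1 ht.2))]

lemma contDiffOn_timeDeriv (hT : 0 < T) (hD : IsOpen D)
    (hY : ContDiffOn ℝ 2 (Function.uncurry Y) (D ×ˢ Icc 0 T)) :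
    ContDiffOn ℝ 1 (Function.uncurry (timeDeriv T Y)) (D ×ˢ Icc 0 T) := by
  refine ((hY.fderivWithin (m := 1) (uniqueDiffOn_prod_Icc hT hD) (by norm_num)).clm_apply
    (contDiffOn_const (c := ((0 : E), (1 : ℝ))))).congr fun q hq => ?_
  exact (fderivWithin_uncurry_apply_zero_one hT (hY.of_le one_le_two) hq.1 hq.2).symm

lemma fderiv_timeDeriv_apply (hT : 0 < T) (hD : IsOpen D)
    (hY : ContDiffOn ℝ 2 (Function.uncurry Y) (D ×ˢ Icc 0 T)) (hx : x ∈ D) (ht : t ∈ Ioo 0 T)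
    (w : E × ℝ) : fderiv ℝ (Function.uncurry (timeDeriv T Y)) (x, t) w
      = fderiv ℝ (fderiv ℝ (Function.uncurry Y)) (x, t) w (0, 1) := by
  have hat : ContDiffAt ℝ 2 (Function.uncurry Y) (x, t) :=
    hY.contDiffAt (prod_mem_nhds (hD.mem_nhds hx) (Icc_mem_nhds ht.1 ht.2))
  have heq : Function.uncurry (timeDeriv T Y)
      =ᶠ[𝓝 (x, t)] fun q => fderiv ℝ (Function.uncurry Y) q (0, 1) := by
    filter_upwards [(hD.prod isOpen_Ioo).mem_nhds (mk_mem_prod hx ht)] with z hz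
    rw [fderiv_uncurry_apply_one hT hD (hY.of_le one_le_two) hz.1 hz.2, map_zero, add_zero,
      Function.uncurry]
  rw [heq.fderiv_eq, fderiv_clm_apply ((hat.fderiv_right (m := 1) (by norm_num)).differentiableAt
    one_ne_zero) (differentiableAt_const _)]
  simp

/-- This is the symmetry of the second derivative. -/
lemma hasDerivAt_timeDeriv_add_fderiv (hT : 0 < T) (hD : IsOpen D)
    (hY : ContDiffOn ℝ 2 (Function.uncurry Y) (D ×ˢ Icc 0 T)) (hx : x ∈ D) (ht : t ∈ Ioo 0 T)
    (v : E) : HasDerivAt (fun τ => timeDeriv T Y x τ + fderiv ℝ (fun z => Y z τ) x v)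
      (timeDeriv T (timeDeriv T Y) x t + fderiv ℝ (fun z => timeDeriv T Y z t) x v) t := by
  have hat : ContDiffAt ℝ 2 (Function.uncurry Y) (x, t) :=
    hY.contDiffAt (prod_mem_nhds (hD.mem_nhds hx) (Icc_mem_nhds ht.1 ht.2))
  have hsymm : IsSymmSndFDerivAt ℝ (Function.uncurry Y) (x, t) :=
    hat.isSymmSndFDerivAt (by rw [minSmoothness_of_isRCLikeNormedField])
  have hderiv : HasDerivAt (fun τ => fderiv ℝ (Function.uncurry Y) (x, τ) (v, 1))
      (fderiv ℝ (fderiv ℝ (Function.uncurry Y)) (x, t) (0, 1) (v, 1)) t := by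
    have hcurve := ((hat.fderiv_right (m := 1) (by norm_num)).differentiableAt
      one_ne_zero).hasFDerivAt.comp_hasDerivAt t ((hasDerivAt_const t x).prodMk (hasDerivAt_id t))
    simpa using hcurve.clm_apply (hasDerivAt_const t ((v : E), (1 : ℝ)))
  rw [← fderiv_uncurry_apply_one hT hD (contDiffOn_timeDeriv hT hD hY) hx ht,
    fderiv_timeDeriv_apply hT hD hY hx ht, hsymm]
  refine hderiv.congr_of_eventuallyEq ?_
  filter_upwards [isOpen_Ioo.mem_nhds ht] with τ hτ
  rw [fderiv_uncurry_apply_one hT hD (hY.of_le one_le_two) hx hτ]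

end TimeDerivative

section Transport

variable {E : Type*} [NormedAddCommGroup E] [NormedSpace ℝ E] {T : ℝ} {D : Set E} {H : E → E}
  {p : E → ℝ} {S u : E → ℝ → ℝ}

/-- The transport equation `∂ₜu + H · ∇u + p u = S` on `D`, at the times in `I ⊆ [0, T]`. -/
def SolvesTransport (T : ℝ) (D : Set E) (I : Set ℝ) (H : E → E) (p : E → ℝ) (S u : E → ℝ → ℝ) :
    Prop :=
  ∀ x ∈ D, ∀ t ∈ I,
    timeDeriv T u x t + fderiv ℝ (fun z => u z t) x (H x) + p x * u x t = S x t

namespace SolvesTransport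

lemma timeDeriv (hu : SolvesTransport T D (Ioo 0 T) H p S u) (hT : 0 < T) (hD : IsOpen D)
    (hu2 : ContDiffOn ℝ 2 (Function.uncurry u) (D ×ˢ Icc 0 T)) {S' : E → ℝ → ℝ}
    (hS : ∀ x ∈ D, ∀ t ∈ Ioo 0 T, HasDerivAt (S x) (S' x t) t) :
    SolvesTransport T D (Ioo 0 T) H p S' (timeDeriv T u) := fun x hx t ht => by
  refine (((hasDerivAt_timeDeriv_add_fderiv hT hD hu2 hx ht (H x)).add
    ((hasDerivAt_timeDeriv (hu2.of_le one_le_two) hx ht).const_mul (p x))).congr_of_eventuallyEq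
      ?_).unique (hS x hx t ht)
  filter_upwards [isOpen_Ioo.mem_nhds ht] with τ hτ
  exact (hu x hx τ hτ).symm

lemma closedInterval (hu : SolvesTransport T D (Ioo 0 T) H p S u) (hT : 0 < T) (hD : IsOpen D)
    (hu1 : ContDiffOn ℝ 1 (Function.uncurry u) (D ×ˢ Icc 0 T))
    (hS : ∀ x ∈ D, ContinuousOn (S x) (Icc 0 T)) :
    SolvesTransport T D (Icc 0 T) H p S u := fun x hx => by
  have hcont : ContinuousOn (fun τ => fderivWithin ℝ (Function.uncurry u) (D ×ˢ Icc 0 T)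
      (x, τ) (H x, 1)) (Icc 0 T) :=
    ((hu1.continuousOn_fderivWithin (uniqueDiffOn_prod_Icc hT hD) le_rfl).uncurry_left x hx
      (f := fun z τ => fderivWithin ℝ (Function.uncurry u) (D ×ˢ Icc 0 T) (z, τ))).clm_apply
      continuousOn_const
  refine EqOn.of_subset_closure (hu x hx) ?_ (hS x hx) Ioo_subset_Icc_self
    (by rw [closure_Ioo hT.ne])
  exact (hcont.congr fun τ hτ => (fderivWithin_uncurry_apply_one hT hD hu1 hx hτ _).symm).add
    (continuousOn_const.mul (hu1.continuousOn.uncurry_left x hx))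

end SolvesTransport

end Transport

section ParametricIntegral

variable {E F : Type*} [NormedAddCommGroup E] [NormedSpace ℝ E] [NormedAddCommGroup F]
  [NormedSpace ℝ F] {T : ℝ} {D : Set E} {Y : E → ℝ → F}

lemma continuousOn_fderiv_space (hT : 0 < T) (hD : IsOpen D)
    (hY : ContDiffOn ℝ 1 (Function.uncurry Y) (D ×ˢ Icc 0 T)) :
    ContinuousOn (Function.uncurry fun x t => fderiv ℝ (fun z => Y z t) x) (D ×ˢ Icc 0 T) :=
  ((hY.continuousOn_fderivWithin (uniqueDiffOn_prod_Icc hT hD) le_rfl).clm_comp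
    (continuousOn_const (c := ContinuousLinearMap.inl ℝ E ℝ))).congr fun _ hq =>
      (hasFDerivAt_of_contDiffOn_uncurry hD hY hq.1 hq.2).fderiv

lemma intervalIntegrable_fderiv_space (hT : 0 < T) (hD : IsOpen D)
    (hY : ContDiffOn ℝ 1 (Function.uncurry Y) (D ×ˢ Icc 0 T)) {x : E} (hx : x ∈ D) :
    IntervalIntegrable (fun t => fderiv ℝ (fun z => Y z t) x) volume 0 T :=
  ContinuousOn.intervalIntegrable_of_Icc hT.le
    ((continuousOn_fderiv_space hT hD hY).uncurry_left x hx)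

lemma hasFDerivAt_intervalIntegral [ProperSpace E] (hT : 0 < T) (hD : IsOpen D)
    (hY : ContDiffOn ℝ 1 (Function.uncurry Y) (D ×ˢ Icc 0 T)) {x₀ : E} (hx₀ : x₀ ∈ D) :
    HasFDerivAt (fun x => ∫ t in (0 : ℝ)..T, Y x t)
      (∫ t in (0 : ℝ)..T, fderiv ℝ (fun z => Y z t) x₀) x₀ := by
  obtain ⟨ε, hε, hball⟩ := Metric.nhds_basis_closedBall.mem_iff.1 (hD.mem_nhds hx₀)
  obtain ⟨C, hC⟩ := ((isCompact_closedBall x₀ ε).prod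
    (isCompact_Icc (a := (0 : ℝ)) (b := T))).exists_bound_of_continuousOn
      ((continuousOn_fderiv_space hT hD hY).mono (prod_mono hball subset_rfl))
  have hIoc : uIoc 0 T ⊆ Icc 0 T := by rw [uIoc_of_le hT.le]; exact Ioc_subset_Icc_self
  refine intervalIntegral.hasFDerivAt_integral_of_dominated_of_fderiv_le
    (F' := fun x t => fderiv ℝ (fun z => Y z t) x) (bound := fun _ => C)
    (closedBall_mem_nhds x₀ hε) ?_ ?_ ?_ ?_ intervalIntegrable_const ?_
  · filter_upwards [hD.mem_nhds hx₀] with x hx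
    exact ((hY.continuousOn.uncurry_left x hx).mono hIoc).aestronglyMeasurable measurableSet_uIoc
  · exact ContinuousOn.intervalIntegrable_of_Icc hT.le (hY.continuousOn.uncurry_left x₀ hx₀)
  · exact (intervalIntegrable_iff.1
      (intervalIntegrable_fderiv_space hT hD hY hx₀)).aestronglyMeasurable
  · exact Eventually.of_forall fun t ht x hx => hC (x, t) ⟨hx, hIoc ht⟩
  · exact Eventually.of_forall fun t ht x hx => (hasFDerivAt_of_contDiffOn_uncurry hD hY (hball hx)
      (hIoc ht)).differentiableAt.hasFDerivAt

lemma contDiffOn_intervalIntegral [ProperSpace E] (hT : 0 < T) (hD : IsOpen D)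
    (hY : ContDiffOn ℝ 1 (Function.uncurry Y) (D ×ˢ Icc 0 T)) :
    ContDiffOn ℝ 1 (fun x => ∫ t in (0 : ℝ)..T, Y x t) D := by
  suffices h : ContDiffOn ℝ (0 + 1) (fun x => ∫ t in (0 : ℝ)..T, Y x t) D by simpa using h
  refine (contDiffOn_succ_iff_fderiv_of_isOpen hD).2 ⟨fun x hx =>
    (hasFDerivAt_intervalIntegral hT hD hY hx).differentiableAt.differentiableWithinAt, by simp,
    contDiffOn_zero.2 ?_⟩
  exact (continuousOn_intervalIntegral hT.le (continuousOn_fderiv_space hT hD hY)).congr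
    fun x hx => (hasFDerivAt_intervalIntegral hT hD hY hx).fderiv

end ParametricIntegral

/-! ### The weighted energy of a solution -/

lemma hasDerivAt_exp_neg_mul (κ t : ℝ) :
    HasDerivAt (fun t => Real.exp (-(κ * t))) (-κ * Real.exp (-(κ * t))) t := by
  simpa [mul_comm] using ((hasDerivAt_id t).const_mul κ).neg.exp

lemma integral_exp_neg_mul_le {κ : ℝ} (hκ : 0 < κ) (T : ℝ) :
    ∫ t in (0 : ℝ)..T, Real.exp (-(κ * t)) ≤ 1 / κ := by
  have hprimitive : ∫ t in (0 : ℝ)..T, κ * Real.exp (-(κ * t))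
      = -Real.exp (-(κ * T)) - -Real.exp (-(κ * 0)) :=
    intervalIntegral.integral_eq_sub_of_hasDerivAt
      (fun t _ => (hasDerivAt_exp_neg_mul κ t).neg.congr_deriv (by ring))
      (Continuous.intervalIntegrable (by fun_prop) _ _)
  rw [intervalIntegral.integral_const_mul, mul_zero, neg_zero, Real.exp_zero] at hprimitive
  rw [le_div_iff₀' hκ, hprimitive]
  linarith [Real.exp_pos (-(κ * T))]

section EnergyInTime

variable {T κ : ℝ} {w w' : ℝ → ℝ}

lemma integral_deriv_sq_mul_exp (hT : 0 ≤ T)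
    (hw : ∀ t ∈ Icc 0 T, HasDerivWithinAt w (w' t) (Icc 0 T) t) (hw' : ContinuousOn w' (Icc 0 T)) :
    ∫ t in (0 : ℝ)..T, (2 * w t * w' t - κ * w t ^ 2) * Real.exp (-(κ * t))
      = Real.exp (-(κ * T)) * w T ^ 2 - w 0 ^ 2 := by
  have hwc : ContinuousOn w (Icc 0 T) := fun t ht => (hw t ht).continuousWithinAt
  rw [intervalIntegral.integral_eq_sub_of_hasDerivAt_of_le hT
    (f := fun t => Real.exp (-(κ * t)) * w t ^ 2) (by fun_prop) (fun t ht => ?_)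
    (ContinuousOn.intervalIntegrable_of_Icc hT (by fun_prop))]
  · simp
  · have hwt := (hw t (Ioo_subset_Icc_self ht)).hasDerivAt (Icc_mem_nhds ht.1 ht.2)
    exact ((hasDerivAt_exp_neg_mul κ t).mul (hwt.pow 2)).congr_deriv
      (by simp only [Pi.pow_apply]; ring)

/-- The cross term with the source is absorbed by `-2wS ≤ w² + S²`. -/
lemma energy_integrand_le {M A p w w' g S : ℝ} (heq : w' + g + p * w = S) (hp : |p| ≤ M)
    (hS : S ^ 2 ≤ A) :
    -(2 * w * w' - κ * w ^ 2) - (κ + 1 + 2 * M) * w ^ 2 - A ≤ 2 * w * g := by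
  have hpw : p * w ^ 2 ≤ M * w ^ 2 := mul_le_mul_of_nonneg_right (le_of_abs_le hp) (sq_nonneg _)
  obtain rfl : g = S - w' - p * w := by linarith
  linarith [sq_nonneg (w + S)]

lemma energy_inequality_in_time {M A p : ℝ} {g S : ℝ → ℝ} (hT : 0 < T) (hκ : 0 < κ)
    (hw : ∀ t ∈ Icc 0 T, HasDerivWithinAt w (w' t) (Icc 0 T) t) (hw' : ContinuousOn w' (Icc 0 T))
    (hg : IntervalIntegrable (fun t => 2 * w t * g t * Real.exp (-(κ * t))) volume 0 T)
    (heq : ∀ t ∈ Ioo 0 T, w' t + g t + p * w t = S t) (hp : |p| ≤ M)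
    (hS : ∀ t ∈ Ioo 0 T, S t ^ 2 ≤ A) :
    w 0 ^ 2 - Real.exp (-(κ * T)) * w T ^ 2
        - (κ + 1 + 2 * M) * (∫ t in (0 : ℝ)..T, w t ^ 2 * Real.exp (-(κ * t))) - A / κ
      ≤ ∫ t in (0 : ℝ)..T, 2 * w t * g t * Real.exp (-(κ * t)) := by
  have hwc : ContinuousOn w (Icc 0 T) := fun t ht => (hw t ht).continuousWithinAt
  have hint {h : ℝ → ℝ} (hh : ContinuousOn h (Icc 0 T)) : IntervalIntegrable h volume 0 T :=
    hh.intervalIntegrable_of_Icc hT.le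
  have hmono : ∫ t in (0 : ℝ)..T, (-((2 * w t * w' t - κ * w t ^ 2) * Real.exp (-(κ * t)))
      - (κ + 1 + 2 * M) * (w t ^ 2 * Real.exp (-(κ * t))) - A * Real.exp (-(κ * t)))
      ≤ ∫ t in (0 : ℝ)..T, 2 * w t * g t * Real.exp (-(κ * t)) := by
    refine intervalIntegral.integral_mono_on_of_le_Ioo hT.le (hint (by fun_prop)) hg fun t ht => ?_
    have hpoint := mul_le_mul_of_nonneg_right (energy_integrand_le (κ := κ) (heq t ht) hp (hS t ht))
      (Real.exp_pos (-(κ * t))).le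
    linarith
  rw [intervalIntegral.integral_sub (hint (by fun_prop)) (hint (by fun_prop)),
    intervalIntegral.integral_sub (hint (by fun_prop)) (hint (by fun_prop)),
    intervalIntegral.integral_neg, integral_deriv_sq_mul_exp hT.le hw hw',
    intervalIntegral.integral_const_mul, intervalIntegral.integral_const_mul] at hmono
  obtain ⟨t₀, ht₀⟩ := nonempty_Ioo.2 hT
  have hexp := mul_le_mul_of_nonneg_left (integral_exp_neg_mul_le hκ T)
    ((sq_nonneg _).trans (hS t₀ ht₀))
  rw [mul_one_div] at hexp
  linarith

end EnergyInTime

/-- The energy of `u` at the point `x`, exponentially weighted in time. The weight makes the data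
at time `T` small compared with those at time `0`. -/
def energyDensity {E : Type*} (T κ : ℝ) (u : E → ℝ → ℝ) (x : E) : ℝ :=
  ∫ t in (0 : ℝ)..T, u x t ^ 2 * Real.exp (-(κ * t))

lemma energyDensity_nonneg {E : Type*} {T : ℝ} (hT : 0 ≤ T) (κ : ℝ) (u : E → ℝ → ℝ) (x : E) :
    0 ≤ energyDensity T κ u x :=
  intervalIntegral.integral_nonneg hT fun t _ => by positivity

lemma continuousOn_energyDensity {E : Type*} [TopologicalSpace E] {T : ℝ} {u : E → ℝ → ℝ}
    {K : Set E} (hT : 0 ≤ T) (hu : ContinuousOn (Function.uncurry u) (K ×ˢ Icc 0 T)) (κ : ℝ) :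
    ContinuousOn (energyDensity T κ u) K :=
  continuousOn_intervalIntegral hT ((hu.pow 2).mul (by fun_prop))

section EnergyDensity

variable {E : Type*} [NormedAddCommGroup E] [NormedSpace ℝ E] {T κ : ℝ} {u : E → ℝ → ℝ}
  {D : Set E}

lemma contDiffOn_energyIntegrand (hu : ContDiffOn ℝ 1 (Function.uncurry u) (D ×ˢ Icc 0 T)) :
    ContDiffOn ℝ 1 (Function.uncurry fun x t => u x t ^ 2 * Real.exp (-(κ * t))) (D ×ˢ Icc 0 T) :=
  (hu.pow 2).mul (by fun_prop)

lemma contDiffOn_energyDensity [ProperSpace E] (hT : 0 < T) (hD : IsOpen D)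
    (hu : ContDiffOn ℝ 1 (Function.uncurry u) (D ×ˢ Icc 0 T)) :
    ContDiffOn ℝ 1 (energyDensity T κ u) D :=
  contDiffOn_intervalIntegral hT hD (contDiffOn_energyIntegrand hu)

lemma fderiv_energyIntegrand_apply (hD : IsOpen D)
    (hu : ContDiffOn ℝ 1 (Function.uncurry u) (D ×ˢ Icc 0 T)) {x : E} (hx : x ∈ D) {t : ℝ}
    (ht : t ∈ Icc 0 T) (v : E) :
    fderiv ℝ (fun z => u z t ^ 2 * Real.exp (-(κ * t))) x v
      = 2 * u x t * fderiv ℝ (fun z => u z t) x v * Real.exp (-(κ * t)) := by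
  have hdiff : DifferentiableAt ℝ (fun z => u z t) x :=
    (hasFDerivAt_of_contDiffOn_uncurry hD hu hx ht).differentiableAt
  rw [((hdiff.hasFDerivAt.pow 2).mul_const (Real.exp (-(κ * t)))).fderiv]
  simp only [Nat.add_one_sub_one, pow_one, nsmul_eq_mul, Nat.cast_ofNat, smul_apply, smul_eq_mul]
  ring

lemma SolvesTransport.energyDensity_le [ProperSpace E] {H : E → E} {p : E → ℝ} {S : E → ℝ → ℝ}
    (heq : SolvesTransport T D (Ioo 0 T) H p S u) (hT : 0 < T) (hκ : 0 < κ) (hD : IsOpen D)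
    (hu : ContDiffOn ℝ 1 (Function.uncurry u) (D ×ˢ Icc 0 T)) {x : E} (hx : x ∈ D) {M A : ℝ}
    (hp : |p x| ≤ M) (hS : ∀ t ∈ Ioo 0 T, S x t ^ 2 ≤ A) :
    u x 0 ^ 2 - Real.exp (-(κ * T)) * u x T ^ 2 - (κ + 1 + 2 * M) * energyDensity T κ u x
      - A / κ ≤ fderiv ℝ (energyDensity T κ u) x (H x) := by
  have hcongr : EqOn (fun t => fderiv ℝ (fun z => u z t ^ 2 * Real.exp (-(κ * t))) x (H x))
      (fun t => 2 * u x t * fderiv ℝ (fun z => u z t) x (H x) * Real.exp (-(κ * t)))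
      (uIcc 0 T) := fun t ht =>
    fderiv_energyIntegrand_apply hD hu hx (by rwa [uIcc_of_le hT.le] at ht) (H x)
  have hint := intervalIntegrable_fderiv_space hT hD (contDiffOn_energyIntegrand (κ := κ) hu) hx
  refine (energy_inequality_in_time hT hκ (fun t ht => hasDerivWithinAt_timeDeriv hu hx ht)
    ((continuousOn_timeDeriv hT hu).uncurry_left x hx) ((intervalIntegrable_congr
      (hcongr.mono uIoc_subset_uIcc)).1 ⟨hint.1.apply_continuousLinearMap _,
        hint.2.apply_continuousLinearMap _⟩) (heq x hx) hp hS).trans_eq ?_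
  rw [← intervalIntegral.integral_congr hcongr, ← ContinuousLinearMap.intervalIntegral_apply hint]
  exact (DFunLike.congr_fun (hasFDerivAt_intervalIntegral hT hD (contDiffOn_energyIntegrand hu)
    hx).fderiv (H x)).symm

end EnergyDensity

section EnergyComparison

variable {E : Type*} {T κ : ℝ} {u : E → ℝ → ℝ} {x : E}

lemma energyDensity_zero (T : ℝ) (u : E → ℝ → ℝ) (x : E) :
    energyDensity T 0 u x = ∫ t in (0 : ℝ)..T, u x t ^ 2 := by
  simp [energyDensity]

lemma energyDensity_le_energyDensity_zero (hT : 0 ≤ T) (hκ : 0 ≤ κ)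
    (hu : ContinuousOn (u x) (Icc 0 T)) : energyDensity T κ u x ≤ energyDensity T 0 u x := by
  refine intervalIntegral.integral_mono_on hT
    (ContinuousOn.intervalIntegrable_of_Icc hT (by fun_prop))
    (ContinuousOn.intervalIntegrable_of_Icc hT (by fun_prop)) fun t ht => ?_
  gcongr
  exact ht.1

lemma exp_mul_energyDensity_zero_le (hT : 0 ≤ T) (hκ : 0 ≤ κ)
    (hu : ContinuousOn (u x) (Icc 0 T)) :
    Real.exp (-(κ * T)) * energyDensity T 0 u x ≤ energyDensity T κ u x := by
  rw [energyDensity_zero, ← intervalIntegral.integral_const_mul]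
  refine intervalIntegral.integral_mono_on hT
    (ContinuousOn.intervalIntegrable_of_Icc hT (by fun_prop))
    (ContinuousOn.intervalIntegrable_of_Icc hT (by fun_prop)) fun t ht => ?_
  rw [mul_comm]
  have := ht.2
  gcongr

end EnergyComparison

section SourceProblem

variable {E : Type*} [NormedAddCommGroup E] [InnerProductSpace ℝ E] {T : ℝ} {D : Set E}
  {H : E → E} {p f : E → ℝ} {R y : E → ℝ → ℝ}

/-- A solution, of class `C²` up to the boundary, of the linearized source problem
`∂ₜy + H · ∇y + p y = R f` on `D × (0, T)` with `y = 0` at time `0`. -/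
structure IsSourceSolution (T : ℝ) (D : Set E) (H : E → E) (p : E → ℝ) (R : E → ℝ → ℝ) (f : E → ℝ)
    (y : E → ℝ → ℝ) : Prop where
  contDiffOn : ContDiffOn ℝ 2 (Function.uncurry y) (closure D ×ˢ Icc 0 T)
  solvesTransport : SolvesTransport T D (Ioo 0 T) H p (fun x t => R x t * f x) y
  initial_eq_zero : ∀ x ∈ D, y x 0 = 0

/-- The pointwise size of the final data: the integrand of `‖u‖²` in `H¹(D)`. -/
def sobolevDensity [CompleteSpace E] (u : E → ℝ) (x : E) : ℝ := u x ^ 2 + ‖gradient u x‖ ^ 2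

lemma sobolevDensity_nonneg [CompleteSpace E] (u : E → ℝ) (x : E) : 0 ≤ sobolevDensity u x := by
  unfold sobolevDensity
  positivity

namespace IsSourceSolution

lemma contDiffOn_interior (hy : IsSourceSolution T D H p R f y) :
    ContDiffOn ℝ 2 (Function.uncurry y) (D ×ˢ Icc 0 T) :=
  hy.contDiffOn.mono (prod_mono subset_closure subset_rfl)

lemma solvesTransport_timeDeriv (hy : IsSourceSolution T D H p R f y) (hT : 0 < T) (hD : IsOpen D)
    (hR : ContDiffOn ℝ 1 (Function.uncurry R) (D ×ˢ Icc 0 T)) :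
    SolvesTransport T D (Ioo 0 T) H p (fun x t => timeDeriv T R x t * f x) (timeDeriv T y) :=
  hy.solvesTransport.timeDeriv hT hD hy.contDiffOn_interior fun x hx _ ht =>
    (hasDerivAt_timeDeriv hR hx ht).mul_const (f x)

lemma solvesTransport_closedInterval (hy : IsSourceSolution T D H p R f y) (hT : 0 < T)
    (hD : IsOpen D) (hR : ContinuousOn (Function.uncurry R) (D ×ˢ Icc 0 T)) :
    SolvesTransport T D (Icc 0 T) H p (fun x t => R x t * f x) y :=
  hy.solvesTransport.closedInterval hT hD (hy.contDiffOn_interior.of_le one_le_two)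
    fun x hx => (hR.uncurry_left x hx).mul continuousOn_const

lemma timeDeriv_initial (hy : IsSourceSolution T D H p R f y) (hT : 0 < T) (hD : IsOpen D)
    (hR : ContinuousOn (Function.uncurry R) (D ×ˢ Icc 0 T)) {x : E} (hx : x ∈ D) :
    timeDeriv T y x 0 = R x 0 * f x := by
  have hzero : (fun z => y z 0) =ᶠ[𝓝 x] fun _ => (0 : ℝ) := by
    filter_upwards [hD.mem_nhds hx] with z hz using hy.initial_eq_zero z hz
  have heq := hy.solvesTransport_closedInterval hT hD hR x hx 0 ⟨le_rfl, hT.le⟩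
  rw [hzero.fderiv_eq, hy.initial_eq_zero x hx] at heq
  simpa using heq

lemma timeDeriv_final_sq_le [CompleteSpace E] (hy : IsSourceSolution T D H p R f y) (hT : 0 < T)
    (hD : IsOpen D) (hR : ContinuousOn (Function.uncurry R) (D ×ˢ Icc 0 T)) {x : E} (hx : x ∈ D)
    {M : ℝ} (hH : ‖H x‖ ≤ M) (hp : |p x| ≤ M) :
    timeDeriv T y x T ^ 2
      ≤ 3 * R x T ^ 2 * f x ^ 2 + 3 * M ^ 2 * sobolevDensity (fun z => y z T) x := by
  have heq := hy.solvesTransport_closedInterval hT hD hR x hx T ⟨hT.le, le_rfl⟩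
  set A := fderiv ℝ (fun z => y z T) x (H x)
  have hAM : |A| ≤ |M * ‖gradient (fun z => y z T) x‖| := by
    rw [norm_gradient_eq_norm_fderiv, mul_comm]
    exact ((fderiv ℝ (fun z => y z T) x).le_opNorm_of_le hH).trans (le_abs_self _)
  have hpM : |p x * y x T| ≤ |M * y x T| := by
    rw [abs_mul, abs_mul]
    exact mul_le_mul_of_nonneg_right (hp.trans (le_abs_self M)) (abs_nonneg _)
  have hsq : timeDeriv T y x T ^ 2 ≤ 3 * ((R x T * f x) ^ 2 + A ^ 2 + (p x * y x T) ^ 2) := by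
    have hderiv : timeDeriv T y x T = R x T * f x - A - p x * y x T := by linarith
    rw [hderiv]
    nlinarith [sq_nonneg (R x T * f x + A), sq_nonneg (R x T * f x + p x * y x T),
      sq_nonneg (A - p x * y x T)]
  unfold sobolevDensity
  linarith [sq_le_sq.2 hAM, sq_le_sq.2 hpM]

end IsSourceSolution

end SourceProblem

/-! ### The Carleman inequality -/

section Carleman

variable {n : ℕ} {T M κ s : ℝ} {D : Set (Esp n)} {H : Esp n → Esp n} {p ψ f Z : Esp n → ℝ}
  {R y : Esp n → ℝ → ℝ} {x : Esp n}

/-- The vector field `e^{sψ} Z H`, whose divergence is estimated from below. -/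
def carlemanField (s : ℝ) (ψ : Esp n → ℝ) (H : Esp n → Esp n) (Z : Esp n → ℝ) (x : Esp n) : Esp n :=
  (Real.exp (s * ψ x) * Z x) • H x

lemma divergence_carlemanField (hH : DifferentiableAt ℝ H x) (hψ : DifferentiableAt ℝ ψ x)
    (hZ : DifferentiableAt ℝ Z x) :
    divergence (carlemanField s ψ H Z) x = Real.exp (s * ψ x) *
      ((divergence H x + s * fderiv ℝ ψ x (H x)) * Z x + fderiv ℝ Z x (H x)) := by
  have hcoef := (hψ.hasFDerivAt.const_mul s).exp.mul hZ.hasFDerivAt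
  have hsmul := divergence_smul hcoef.differentiableAt hH
  rw [hcoef.fderiv] at hsmul
  refine Eq.trans hsmul ?_
  simp only [Pi.mul_apply, add_apply, smul_apply, smul_eq_mul]
  ring

lemma exp_mul_add_le_divergence_carlemanField (hH : DifferentiableAt ℝ H x)
    (hψ : DifferentiableAt ℝ ψ x) (hZ : DifferentiableAt ℝ Z x) (hZ0 : 0 ≤ Z x) {a c : ℝ}
    (hc : c + 1 ≤ divergence H x + s * fderiv ℝ ψ x (H x))
    (hZH : a - c * Z x ≤ fderiv ℝ Z x (H x)) :
    Real.exp (s * ψ x) * (Z x + a) ≤ divergence (carlemanField s ψ H Z) x := by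
  rw [divergence_carlemanField hH hψ hZ]
  refine mul_le_mul_of_nonneg_left ?_ (Real.exp_pos _).le
  linarith [mul_le_mul_of_nonneg_right hc hZ0]

/-- Admissible parameters for the Carleman inequality: the decay rate `κ` of the weight in time
absorbs the source term of the differentiated equation and the part of the final data that contains
`f`; the strength `s` of the weight `e^{sψ}` then absorbs all terms of order zero. -/
structure CarlemanParameters (T : ℝ) (D : Set (Esp n)) (H : Esp n → Esp n) (p ψ : Esp n → ℝ)
    (R : Esp n → ℝ → ℝ) (M κ s : ℝ) : Prop where
  bound_pos : 0 < M
  decay_pos : 0 < κ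
  norm_field_le : ∀ x ∈ closure D, ‖H x‖ ≤ M
  abs_potential_le : ∀ x ∈ D, |p x| ≤ M
  timeDeriv_sq_le : ∀ x ∈ D, ∀ t ∈ Ioo 0 T, timeDeriv T R x t ^ 2 ≤ κ * (R x 0 ^ 2 / 4)
  exp_mul_final_sq_le : ∀ x ∈ D, Real.exp (-(κ * T)) * (3 * R x T ^ 2) ≤ R x 0 ^ 2 / 4
  le_divergence_add : ∀ x ∈ D, κ + 1 + 2 * M + 1 ≤ divergence H x + s * fderiv ℝ ψ x (H x)

namespace CarlemanParameters

lemma le_fderiv_energyDensity (hc : CarlemanParameters T D H p ψ R M κ s)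
    (hy : IsSourceSolution T D H p R f y) (hT : 0 < T) (hD : IsOpen D)
    (hR : ContDiffOn ℝ 1 (Function.uncurry R) (D ×ˢ Icc 0 T)) (hx : x ∈ D) :
    (R x 0 ^ 2 / 2 * f x ^ 2 - 3 * M ^ 2 * sobolevDensity (fun z => y z T) x)
        - (κ + 1 + 2 * M) * energyDensity T κ (timeDeriv T y) x
      ≤ fderiv ℝ (energyDensity T κ (timeDeriv T y)) x (H x) := by
  have henergy := (hy.solvesTransport_timeDeriv hT hD hR).energyDensity_le hT hc.decay_pos hD
    (contDiffOn_timeDeriv hT hD hy.contDiffOn_interior) hx (A := κ * (R x 0 ^ 2 / 4) * f x ^ 2)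
    (hc.abs_potential_le x hx) fun t ht => by
      rw [mul_pow]
      exact mul_le_mul_of_nonneg_right (hc.timeDeriv_sq_le x hx t ht) (sq_nonneg _)
  have hfinal : Real.exp (-(κ * T)) * timeDeriv T y x T ^ 2
      ≤ R x 0 ^ 2 / 4 * f x ^ 2 + 3 * M ^ 2 * sobolevDensity (fun z => y z T) x := by
    have hexp : Real.exp (-(κ * T)) ≤ 1 :=
      Real.exp_le_one_iff.2 (neg_nonpos.2 (mul_pos hc.decay_pos hT).le)
    have hdata : 0 ≤ 3 * M ^ 2 * sobolevDensity (fun z => y z T) x :=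
      mul_nonneg (by positivity) (sobolevDensity_nonneg _ x)
    calc Real.exp (-(κ * T)) * timeDeriv T y x T ^ 2
        ≤ Real.exp (-(κ * T)) * (3 * R x T ^ 2 * f x ^ 2
            + 3 * M ^ 2 * sobolevDensity (fun z => y z T) x) := by
          gcongr
          exact hy.timeDeriv_final_sq_le hT hD hR.continuousOn hx
            (hc.norm_field_le x (subset_closure hx))
            (hc.abs_potential_le x hx)
      _ = Real.exp (-(κ * T)) * (3 * R x T ^ 2) * f x ^ 2
            + Real.exp (-(κ * T)) * (3 * M ^ 2 * sobolevDensity (fun z => y z T) x) := by ring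
      _ ≤ _ := add_le_add (mul_le_mul_of_nonneg_right (hc.exp_mul_final_sq_le x hx) (sq_nonneg _))
          (mul_le_of_le_one_left hdata hexp)
  rw [hy.timeDeriv_initial hT hD hR.continuousOn hx, mul_pow, mul_assoc κ,
    mul_div_cancel_left₀ _ hc.decay_pos.ne'] at henergy
  linarith

theorem le_divergence_carlemanField (hc : CarlemanParameters T D H p ψ R M κ s)
    (hy : IsSourceSolution T D H p R f y) (hT : 0 < T) (hD : IsOpen D)
    (hR : ContDiffOn ℝ 1 (Function.uncurry R) (D ×ˢ Icc 0 T)) (hH : DifferentiableOn ℝ H D)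
    (hψ : DifferentiableOn ℝ ψ D) (hx : x ∈ D) :
    Real.exp (s * ψ x) * (energyDensity T κ (timeDeriv T y) x + (R x 0 ^ 2 / 2 * f x ^ 2
        - 3 * M ^ 2 * sobolevDensity (fun z => y z T) x))
      ≤ divergence (carlemanField s ψ H (energyDensity T κ (timeDeriv T y))) x :=
  exp_mul_add_le_divergence_carlemanField (hH.differentiableAt (hD.mem_nhds hx))
    (hψ.differentiableAt (hD.mem_nhds hx))
    (((contDiffOn_energyDensity hT hD (contDiffOn_timeDeriv hT hD
      hy.contDiffOn_interior)).differentiableOn one_ne_zero).differentiableAt (hD.mem_nhds hx))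
    (energyDensity_nonneg hT.le _ _ x) (hc.le_divergence_add x hx)
    (hc.le_fderiv_energyDensity hy hT hD hR hx)

end CarlemanParameters

end Carleman

/-! ### Integration over the graph domain -/

lemma upwardFlux_smul (m : Esp d → ℝ) (c : Esp (d + 1) → ℝ) (H : Esp (d + 1) → Esp (d + 1))
    (x : Esp (d + 1)) : upwardFlux m (c • H) x = c x * upwardFlux m H x :=
  real_inner_smul_left _ _ _

lemma upwardFlux_nonneg_of_inner_nuDown_nonpos {m : Esp d → ℝ} {H : Esp (d + 1) → Esp (d + 1)}
    {x' : Esp d} {s : ℝ} (h : ⟪H (graphMk d x' s), nuDown d m x'⟫ ≤ 0) :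
    0 ≤ upwardFlux m H (graphMk d x' s) := by
  rw [nuDown, inner_smul_right] at h
  have hflux := nonpos_of_mul_nonpos_right h (by positivity)
  rw [inner_graphMk] at hflux
  rw [upwardFlux, headProj_graphMk, inner_graphMk, inner_neg_right]
  linarith

lemma omegaW_nonneg (m : Esp d → ℝ) (x' : Esp d) : 0 ≤ omegaW d m x' := Real.sqrt_nonneg _

lemma integrableOn_omegaW {m : Esp d → ℝ} (hm : ContDiffOn ℝ 1 m (closedBall 0 ρ₁)) :
    IntegrableOn (omegaW d m) (ball 0 ρ₁) := by
  obtain ⟨W, hW⟩ := exists_omegaW_le hm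
  have hcont : ContinuousOn (omegaW d m) (ball 0 ρ₁) :=
    (continuousOn_const.add ((continuousOn_gradient isOpen_ball
      (hm.mono ball_subset_closedBall)).norm.pow 2)).sqrt
  refine IntegrableOn.of_bound measure_ball_lt_top
    (hcont.aestronglyMeasurable measurableSet_ball) W ?_
  filter_upwards [ae_restrict_mem measurableSet_ball] with x' hx'
  rw [Real.norm_of_nonneg (omegaW_nonneg m x')]
  exact hW x' hx'

namespace IsGraphLens

lemma continuousOn_upperGraph (hG : IsGraphLens ρ₁ ℓ ℓt) :
    ContinuousOn (fun x' => graphMk d x' (ℓ x')) (ball 0 ρ₁) :=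
  continuous_graphMk.comp_continuousOn (continuousOn_id.prodMk
    (hG.contDiffOn_upper.continuousOn.mono ball_subset_closedBall))

lemma integrableOn_upperGraph_mul_omegaW (hG : IsGraphLens ρ₁ ℓ ℓt) {g : Esp (d + 1) → ℝ}
    (hg : ContinuousOn g (closure (graphDomain d ρ₁ ℓ ℓt))) :
    IntegrableOn (fun x' => g (graphMk d x' (ℓ x')) * omegaW d ℓ x') (ball 0 ρ₁) := by
  obtain ⟨C, hC⟩ := hG.isCompact_closure.exists_bound_of_continuousOn hg
  refine (integrableOn_omegaW hG.contDiffOn_upper).bdd_mul (c := C)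
    ((hg.comp hG.continuousOn_upperGraph fun x' hx' =>
      hG.upperGraph_mem_closure hx').aestronglyMeasurable measurableSet_ball) ?_
  filter_upwards [ae_restrict_mem measurableSet_ball] with x' hx'
  exact hC _ (hG.upperGraph_mem_closure hx')

lemma integrableOn_sobolevDensity (hG : IsGraphLens ρ₁ ℓ ℓt) {g : Esp (d + 1) → ℝ}
    (hg : ContDiffOn ℝ 1 g (closure (graphDomain d ρ₁ ℓ ℓt))) :
    IntegrableOn (sobolevDensity g) (graphDomain d ρ₁ ℓ ℓt) := by
  obtain ⟨C, hC⟩ := exists_norm_fderiv_le hG.isCompact_closure hg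
  have hgrad := continuousOn_gradient hG.isOpen (hg.mono subset_closure)
  refine (hG.integrableOn_of_continuousOn_closure (hg.continuousOn.pow 2)).add
    (IntegrableOn.of_bound hG.volume_lt_top
      ((hgrad.norm.pow 2).aestronglyMeasurable hG.isOpen.measurableSet) (C ^ 2) ?_)
  filter_upwards [ae_restrict_mem hG.isOpen.measurableSet] with x hx
  rw [norm_pow, norm_norm, norm_gradient_eq_norm_fderiv]
  gcongr
  exact hC x (interior_maximal subset_closure hG.isOpen hx)

section WeightedField

variable {H : Esp (d + 1) → Esp (d + 1)} {b c L : Esp (d + 1) → ℝ} {M : ℝ}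

lemma setIntegral_upwardFlux_le (hG : IsGraphLens ρ₁ ℓ ℓt)
    (hH : ContinuousOn H (closure (graphDomain d ρ₁ ℓ ℓt)))
    (hHM : ∀ x ∈ closure (graphDomain d ρ₁ ℓ ℓt), ‖H x‖ ≤ M)
    (hc : ContinuousOn c (closure (graphDomain d ρ₁ ℓ ℓt)))
    (hb : ContinuousOn b (closure (graphDomain d ρ₁ ℓ ℓt)))
    (hcb : ∀ x ∈ closure (graphDomain d ρ₁ ℓ ℓt), |c x| ≤ b x) :
    ∫ x' in ball (0 : Esp d) ρ₁, upwardFlux ℓ (c • H) (graphMk d x' (ℓ x'))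
      ≤ M * ∫ x' in ball (0 : Esp d) ρ₁, b (graphMk d x' (ℓ x')) * omegaW d ℓ x' := by
  have hint := (hG.integrableOn_upperGraph_mul_omegaW hb).const_mul M
  have hle : ∀ x' ∈ ball (0 : Esp d) ρ₁, |upwardFlux ℓ (c • H) (graphMk d x' (ℓ x'))|
      ≤ M * (b (graphMk d x' (ℓ x')) * omegaW d ℓ x') := fun x' hx' => by
    have hmem := hG.upperGraph_mem_closure hx'
    calc |upwardFlux ℓ (c • H) (graphMk d x' (ℓ x'))|
        ≤ |c (graphMk d x' (ℓ x'))| * ‖H (graphMk d x' (ℓ x'))‖ * omegaW d ℓ x' := by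
          simpa only [Pi.smul_apply', norm_smul, Real.norm_eq_abs, headProj_graphMk]
            using abs_upwardFlux_le ℓ (c • H) (graphMk d x' (ℓ x'))
      _ ≤ b (graphMk d x' (ℓ x')) * M * omegaW d ℓ x' :=
          mul_le_mul_of_nonneg_right (mul_le_mul (hcb _ hmem) (hHM _ hmem) (norm_nonneg _)
            ((abs_nonneg _).trans (hcb _ hmem))) (omegaW_nonneg ℓ x')
      _ = M * (b (graphMk d x' (ℓ x')) * omegaW d ℓ x') := by ring
  have hcont : ContinuousOn (fun x' => upwardFlux ℓ (c • H) (graphMk d x' (ℓ x'))) (ball 0 ρ₁) :=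
    (hG.continuousOn_upwardFlux hG.contDiffOn_upper (hc.smul hH)).comp hG.continuousOn_upperGraph
      fun x' hx' => graphMk_mem_graphDomainWithFaces hx' ⟨(hG.lower_lt_upper hx').le, le_rfl⟩
  rw [← integral_const_mul]
  refine setIntegral_mono_on (hint.mono' (hcont.aestronglyMeasurable measurableSet_ball) ?_) hint
    measurableSet_ball fun x' hx' => (le_abs_self _).trans (hle x' hx')
  filter_upwards [ae_restrict_mem measurableSet_ball] with x' hx' using hle x' hx'

theorem setIntegral_le_upperGraph_of_le_divergence (hG : IsGraphLens ρ₁ ℓ ℓt)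
    (hH : ContinuousOn H (closure (graphDomain d ρ₁ ℓ ℓt)))
    (hHM : ∀ x ∈ closure (graphDomain d ρ₁ ℓ ℓt), ‖H x‖ ≤ M)
    (hν : ∀ x' ∈ ball (0 : Esp d) ρ₁,
      ⟪H (graphMk d x' (ℓ x' - ℓt x')), nuDown d (fun z => ℓ z - ℓt z) x'⟫ ≤ 0)
    (hc : ContinuousOn c (closure (graphDomain d ρ₁ ℓ ℓt)))
    (hc0 : ∀ x ∈ closure (graphDomain d ρ₁ ℓ ℓt), 0 ≤ c x)
    (hb : ContinuousOn b (closure (graphDomain d ρ₁ ℓ ℓt)))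
    (hcb : ∀ x ∈ closure (graphDomain d ρ₁ ℓ ℓt), c x ≤ b x)
    (hcH : ContDiffOn ℝ 1 (c • H) (graphDomain d ρ₁ ℓ ℓt))
    (hL : IntegrableOn L (graphDomain d ρ₁ ℓ ℓt))
    (hLF : ∀ x ∈ graphDomain d ρ₁ ℓ ℓt, L x ≤ divergence (c • H) x) :
    ∫ x in graphDomain d ρ₁ ℓ ℓt, L x
      ≤ M * ∫ x' in ball (0 : Esp d) ρ₁, b (graphMk d x' (ℓ x')) * omegaW d ℓ x' := by
  have hupper := hG.setIntegral_upwardFlux_le hH hHM hc hb fun x hx => by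
    rw [abs_of_nonneg (hc0 x hx)]
    exact hcb x hx
  have hlower : 0 ≤ ∫ x' in ball (0 : Esp d) ρ₁,
      upwardFlux (fun z => ℓ z - ℓt z) (c • H) (graphMk d x' (ℓ x' - ℓt x')) :=
    setIntegral_nonneg measurableSet_ball fun x' hx' => by
      rw [upwardFlux_smul]
      exact mul_nonneg
        (hc0 _ (hG.graphMk_mem_closure hx' ⟨le_rfl, (hG.lower_lt_upper hx').le⟩))
        (upwardFlux_nonneg_of_inner_nuDown_nonpos (hν x' hx'))
  linarith [hG.setIntegral_le_of_le_divergence (hc.smul hH) hcH hL hLF]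

end WeightedField

end IsGraphLens

/-! ### Integrated Carleman inequality -/

lemma exists_large_decay {T r : ℝ} (hT : 0 < T) (hr : 0 < r) (A B : ℝ) :
    ∃ κ : ℝ, 0 < κ ∧ A ≤ κ * r ∧ Real.exp (-(κ * T)) * B ≤ r := by
  have hlinear : Tendsto (fun κ : ℝ => κ * r) atTop atTop := tendsto_id.atTop_mul_const hr
  have hexp : Tendsto (fun κ : ℝ => Real.exp (-(κ * T)) * B) atTop (𝓝 (0 * B)) :=
    (Real.tendsto_exp_neg_atTop_nhds_zero.comp (tendsto_id.atTop_mul_const hT)).mul_const B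
  rw [zero_mul] at hexp
  exact ((eventually_gt_atTop 0).and ((hlinear.eventually_ge_atTop A).and
    (hexp.eventually (ge_mem_nhds hr)))).exists

section ParameterChoice

variable {n : ℕ} {ε : ℝ} {D : Set (Esp n)} {H : Esp n → Esp n} {ψ : Esp n → ℝ}

lemma exists_le_divergence_add_mul_fderiv (hD : IsOpen D) (hK : IsCompact (closure D))
    (hH : ContDiffOn ℝ 1 H (closure D)) (hε : 0 < ε) (hψ : ∀ x ∈ D, ε ≤ fderiv ℝ ψ x (H x))
    (c : ℝ) : ∃ s, ∀ x ∈ D, c ≤ divergence H x + s * fderiv ℝ ψ x (H x) := by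
  obtain ⟨N, hN⟩ := exists_norm_fderiv_le hK hH
  refine ⟨max 0 (c + n * N) / ε, fun x hx => ?_⟩
  have hdiv : -(n * N) ≤ divergence H x :=
    neg_le_of_abs_le ((abs_divergence_le H x).trans (mul_le_mul_of_nonneg_left
      (hN x (hD.subset_interior_iff.2 subset_closure hx)) n.cast_nonneg))
  have hlarge : c + n * N ≤ max 0 (c + n * N) / ε * fderiv ℝ ψ x (H x) :=
    calc c + n * N ≤ max 0 (c + n * N) := le_max_right _ _
      _ = max 0 (c + n * N) / ε * ε := (div_mul_cancel₀ _ hε.ne').symm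
      _ ≤ _ := mul_le_mul_of_nonneg_left (hψ x hx) (by positivity)
  linarith

theorem exists_carlemanParameters {T M₀ : ℝ} {p : Esp n → ℝ} {R : Esp n → ℝ → ℝ} (hT : 0 < T)
    (hD : IsOpen D) (hK : IsCompact (closure D))
    (hR : ContDiffOn ℝ 1 (Function.uncurry R) (closure D ×ˢ Icc 0 T))
    (hR0 : ∀ x ∈ closure D, R x 0 ≠ 0) (hH : ContDiffOn ℝ 1 H (closure D))
    (hp : ∀ x ∈ D, |p x| ≤ M₀) (hε : 0 < ε) (hψ : ∀ x ∈ D, ε ≤ fderiv ℝ ψ x (H x)) :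
    ∃ M κ s, CarlemanParameters T D H p ψ R M κ s := by
  have hslice {t : ℝ} (ht : t ∈ Icc 0 T) : ContinuousOn (fun x => R x t) (closure D) :=
    hR.continuousOn.uncurry_right t ht
  obtain ⟨N, hN⟩ := hK.exists_bound_of_continuousOn hH.continuousOn
  obtain ⟨r, hr, hrR⟩ := hK.exists_forall_le' ((hslice ⟨le_rfl, hT.le⟩).pow 2)
    fun x hx => sq_pos_of_ne_zero (hR0 x hx)
  obtain ⟨R₁, hR₁⟩ := hK.exists_bound_of_continuousOn (hslice ⟨hT.le, le_rfl⟩)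
  obtain ⟨B, hB⟩ := (hK.prod isCompact_Icc).exists_bound_of_continuousOn
    (continuousOn_timeDeriv hT hR)
  obtain ⟨κ, hκ, hκB, hκR⟩ := exists_large_decay hT (show 0 < r / 4 by positivity) (B ^ 2)
    (3 * R₁ ^ 2)
  set M := max 1 (max M₀ N)
  have hmin {x : Esp n} (hx : x ∈ D) : r / 4 ≤ R x 0 ^ 2 / 4 := by
    gcongr
    exact hrR x (subset_closure hx)
  obtain ⟨s, hs⟩ := exists_le_divergence_add_mul_fderiv hD hK hH hε hψ (κ + 1 + 2 * M + 1)
  refine ⟨M, κ, s, ?_, hκ, ?_, ?_, ?_, ?_, hs⟩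
  · exact one_pos.trans_le (le_max_left _ _)
  · exact fun x hx => (hN x hx).trans ((le_max_right _ _).trans (le_max_right _ _))
  · exact fun x hx => (hp x hx).trans ((le_max_left _ _).trans (le_max_right _ _))
  · intro x hx t ht
    have hBx := hB (x, t) ⟨subset_closure hx, Ioo_subset_Icc_self ht⟩
    exact (sq_le_sq' (neg_le_of_abs_le hBx) (le_of_abs_le hBx)).trans
      (hκB.trans (mul_le_mul_of_nonneg_left (hmin hx) hκ.le))
  · intro x hx
    have hRx := hR₁ x (subset_closure hx)
    have hsq := sq_le_sq' (neg_le_of_abs_le hRx) (le_of_abs_le hRx)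
    calc Real.exp (-(κ * T)) * (3 * R x T ^ 2)
      _ ≤ Real.exp (-(κ * T)) * (3 * R₁ ^ 2) := by gcongr
      _ ≤ r / 4 := hκR
      _ ≤ R x 0 ^ 2 / 4 := hmin hx

end ParameterChoice

lemma exp_neg_mul_sub_le_exp_mul_sub {K θ a a' b : ℝ} (hθ : |θ| ≤ K) (ha : 0 ≤ a) (haa' : a ≤ a')
    (hb : 0 ≤ b) :
    Real.exp (-K) * a - Real.exp K * b ≤ Real.exp θ * (a' - b) := by
  obtain ⟨hlow, hhigh⟩ := abs_le.1 hθ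
  rw [mul_sub]
  gcongr

namespace CarlemanParameters

lemma mul_sub_mul_le_divergence_carlemanField {n : ℕ} {T M κ s : ℝ} {D : Set (Esp n)}
    {H : Esp n → Esp n} {p ψ f : Esp n → ℝ} {R y : Esp n → ℝ → ℝ} {x : Esp n}
    (hc : CarlemanParameters T D H p ψ R M κ s) (hy : IsSourceSolution T D H p R f y) (hT : 0 < T)
    (hD : IsOpen D) (hR : ContDiffOn ℝ 1 (Function.uncurry R) (D ×ˢ Icc 0 T))
    (hH : DifferentiableOn ℝ H D) (hψ : DifferentiableOn ℝ ψ D) (hx : x ∈ D) {K r : ℝ}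
    (hK : |s * ψ x| ≤ K) (hr : 0 ≤ r) (hrR : r ≤ R x 0 ^ 2) :
    Real.exp (-K) * (min (Real.exp (-(κ * T))) (r / 2)
          * (f x ^ 2 + energyDensity T 0 (timeDeriv T y) x))
        - Real.exp K * (3 * M ^ 2 * sobolevDensity (fun z => y z T) x)
      ≤ divergence (carlemanField s ψ H (energyDensity T κ (timeDeriv T y))) x := by
  have hu : ContinuousOn (timeDeriv T y x) (Icc 0 T) :=
    (continuousOn_timeDeriv hT (hy.contDiffOn_interior.of_le one_le_two)).uncurry_left x hx
  have hS := energyDensity_nonneg hT.le 0 (timeDeriv T y) x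
  have hlower : min (Real.exp (-(κ * T))) (r / 2)
        * (f x ^ 2 + energyDensity T 0 (timeDeriv T y) x)
      ≤ energyDensity T κ (timeDeriv T y) x + R x 0 ^ 2 / 2 * f x ^ 2 :=
    calc _ ≤ r / 2 * f x ^ 2
            + Real.exp (-(κ * T)) * energyDensity T 0 (timeDeriv T y) x := by
          rw [mul_add]
          gcongr
          exacts [min_le_right _ _, min_le_left _ _]
      _ ≤ R x 0 ^ 2 / 2 * f x ^ 2 + energyDensity T κ (timeDeriv T y) x := by
          gcongr
          exact exp_mul_energyDensity_zero_le hT.le hc.decay_pos.le hu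
      _ = _ := add_comm _ _
  refine (exp_neg_mul_sub_le_exp_mul_sub hK (by positivity) hlower
    (mul_nonneg (by positivity) (sobolevDensity_nonneg _ _))).trans ?_
  rw [add_sub_assoc]
  exact hc.le_divergence_carlemanField hy hT hD hR hH hψ hx

section GraphDomain

variable {T M κ s : ℝ} {H : Esp (d + 1) → Esp (d + 1)} {p ψ f : Esp (d + 1) → ℝ}
  {R y : Esp (d + 1) → ℝ → ℝ}

lemma mul_integral_sub_mul_integral_le
    (hc : CarlemanParameters T (graphDomain d ρ₁ ℓ ℓt) H p ψ R M κ s) (hG : IsGraphLens ρ₁ ℓ ℓt)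
    (hT : 0 < T)
    (hR : ContDiffOn ℝ 1 (Function.uncurry R) (closure (graphDomain d ρ₁ ℓ ℓt) ×ˢ Icc 0 T))
    (hH : ContDiffOn ℝ 1 H (closure (graphDomain d ρ₁ ℓ ℓt)))
    (hψ : ContDiffOn ℝ 1 ψ (closure (graphDomain d ρ₁ ℓ ℓt)))
    (hν : ∀ x' ∈ ball (0 : Esp d) ρ₁,
      ⟪H (graphMk d x' (ℓ x' - ℓt x')), nuDown d (fun z => ℓ z - ℓt z) x'⟫ ≤ 0)
    {K r : ℝ} (hK : ∀ x ∈ closure (graphDomain d ρ₁ ℓ ℓt), |s * ψ x| ≤ K) (hr : 0 ≤ r)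
    (hrR : ∀ x ∈ closure (graphDomain d ρ₁ ℓ ℓt), r ≤ R x 0 ^ 2)
    (hf : ContinuousOn f (closure (graphDomain d ρ₁ ℓ ℓt)))
    (hy : IsSourceSolution T (graphDomain d ρ₁ ℓ ℓt) H p R f y) :
    Real.exp (-K) * (min (Real.exp (-(κ * T))) (r / 2)
          * ((∫ x in graphDomain d ρ₁ ℓ ℓt, f x ^ 2)
            + ∫ x in graphDomain d ρ₁ ℓ ℓt, energyDensity T 0 (timeDeriv T y) x))
        - Real.exp K
          * (3 * M ^ 2 * ∫ x in graphDomain d ρ₁ ℓ ℓt, sobolevDensity (fun z => y z T) x)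
      ≤ M * (Real.exp K * ∫ x' in ball (0 : Esp d) ρ₁,
          energyDensity T 0 (timeDeriv T y) (graphMk d x' (ℓ x')) * omegaW d ℓ x') := by
  have hsub : graphDomain d ρ₁ ℓ ℓt ⊆ closure (graphDomain d ρ₁ ℓ ℓt) := subset_closure
  have hy1 := hy.contDiffOn.of_le one_le_two
  have hu := continuousOn_timeDeriv hT hy1
  have hE (κ : ℝ) : ContinuousOn (energyDensity T κ (timeDeriv T y))
      (closure (graphDomain d ρ₁ ℓ ℓt)) := continuousOn_energyDensity hT.le hu κ
  have hEnergy := hG.integrableOn_of_continuousOn_closure (hE 0)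
  have hSource : IntegrableOn (fun x => f x ^ 2) (graphDomain d ρ₁ ℓ ℓt) :=
    hG.integrableOn_of_continuousOn_closure (hf.pow 2)
  have hFinal := hG.integrableOn_sobolevDensity (g := fun z => y z T)
    (hy1.comp (by fun_prop : ContDiffOn ℝ 1 (fun x => (x, T)) _) fun x hx => ⟨hx, hT.le, le_rfl⟩)
  have hleft := ((hSource.add hEnergy).const_mul (min (Real.exp (-(κ * T))) (r / 2))).const_mul
    (Real.exp (-K))
  have hright := (hFinal.const_mul (3 * M ^ 2)).const_mul (Real.exp K)
  have hweight (x) (hx : x ∈ closure (graphDomain d ρ₁ ℓ ℓt)) :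
      Real.exp (s * ψ x) * energyDensity T κ (timeDeriv T y) x
        ≤ Real.exp K * energyDensity T 0 (timeDeriv T y) x :=
    mul_le_mul (Real.exp_le_exp.2 (le_of_abs_le (hK x hx)))
      (energyDensity_le_energyDensity_zero hT.le hc.decay_pos.le (hu.uncurry_left x hx))
      (energyDensity_nonneg hT.le _ _ _) (Real.exp_pos _).le
  have hE1 : ContDiffOn ℝ 1 (energyDensity T κ (timeDeriv T y)) (graphDomain d ρ₁ ℓ ℓt) :=
    contDiffOn_energyDensity hT hG.isOpen (contDiffOn_timeDeriv hT hG.isOpen hy.contDiffOn_interior)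
  have hupper := hG.setIntegral_le_upperGraph_of_le_divergence hH.continuousOn hc.norm_field_le hν
    (c := fun x => Real.exp (s * ψ x) * energyDensity T κ (timeDeriv T y) x)
    (b := fun x => Real.exp K * energyDensity T 0 (timeDeriv T y) x)
    ((continuousOn_const.mul hψ.continuousOn).rexp.mul (hE κ))
    (fun x _ => mul_nonneg (Real.exp_pos _).le (energyDensity_nonneg hT.le _ _ _))
    (continuousOn_const.mul (hE 0)) hweight
    (((contDiffOn_const.mul (hψ.mono hsub)).exp.mul hE1).smul (hH.mono hsub))
    (hleft.sub hright)
    fun x hx => hc.mul_sub_mul_le_divergence_carlemanField hy hT hG.isOpen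
      (hR.mono (prod_mono_left hsub)) ((hH.mono hsub).differentiableOn one_ne_zero)
      ((hψ.mono hsub).differentiableOn one_ne_zero) hx (hK x (hsub hx)) hr (hrR x (hsub hx))
  simp only [mul_assoc (Real.exp K)] at hupper
  simpa only [Pi.sub_apply, integral_sub hleft hright, integral_const_mul,
    integral_add' hSource hEnergy] using hupper

theorem exists_integral_sq_add_integral_energyDensity_le
    (hc : CarlemanParameters T (graphDomain d ρ₁ ℓ ℓt) H p ψ R M κ s) (hG : IsGraphLens ρ₁ ℓ ℓt)
    (hT : 0 < T)
    (hR : ContDiffOn ℝ 1 (Function.uncurry R) (closure (graphDomain d ρ₁ ℓ ℓt) ×ˢ Icc 0 T))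
    (hR0 : ∀ x ∈ closure (graphDomain d ρ₁ ℓ ℓt), R x 0 ≠ 0)
    (hH : ContDiffOn ℝ 1 H (closure (graphDomain d ρ₁ ℓ ℓt)))
    (hψ : ContDiffOn ℝ 1 ψ (closure (graphDomain d ρ₁ ℓ ℓt)))
    (hν : ∀ x' ∈ ball (0 : Esp d) ρ₁,
      ⟪H (graphMk d x' (ℓ x' - ℓt x')), nuDown d (fun z => ℓ z - ℓt z) x'⟫ ≤ 0) :
    ∃ C > 0, ∀ f y, ContinuousOn f (closure (graphDomain d ρ₁ ℓ ℓt)) →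
      IsSourceSolution T (graphDomain d ρ₁ ℓ ℓt) H p R f y →
      (∫ x in graphDomain d ρ₁ ℓ ℓt, f x ^ 2)
          + (∫ x in graphDomain d ρ₁ ℓ ℓt, energyDensity T 0 (timeDeriv T y) x)
        ≤ C * ((∫ x' in ball (0 : Esp d) ρ₁,
            energyDensity T 0 (timeDeriv T y) (graphMk d x' (ℓ x')) * omegaW d ℓ x')
          + ∫ x in graphDomain d ρ₁ ℓ ℓt, sobolevDensity (fun z => y z T) x) := by
  obtain ⟨K, hK⟩ := hG.isCompact_closure.exists_bound_of_continuousOn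
    ((continuousOn_const (c := s)).mul hψ.continuousOn)
  obtain ⟨r, hr, hrR⟩ := hG.isCompact_closure.exists_forall_le'
    ((hR.continuousOn.uncurry_right (0 : ℝ) (left_mem_Icc.2 hT.le)).pow 2)
    fun x hx => sq_pos_of_ne_zero (hR0 x hx)
  have hM := hc.bound_pos
  have hc₀ : 0 < Real.exp (-K) * min (Real.exp (-(κ * T))) (r / 2) := by positivity
  refine ⟨Real.exp K * (M + 3 * M ^ 2) / (Real.exp (-K) * min (Real.exp (-(κ * T))) (r / 2)),
    by positivity, fun f y hf hy => ?_⟩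
  have hmain := hc.mul_integral_sub_mul_integral_le hG hT hR hH hψ hν hK hr.le hrR hf hy
  have hBoundary : 0 ≤ ∫ x' in ball (0 : Esp d) ρ₁,
      energyDensity T 0 (timeDeriv T y) (graphMk d x' (ℓ x')) * omegaW d ℓ x' :=
    integral_nonneg fun x' => mul_nonneg (energyDensity_nonneg hT.le _ _ _) (omegaW_nonneg _ _)
  have hFinal : 0 ≤ ∫ x in graphDomain d ρ₁ ℓ ℓt, sobolevDensity (fun z => y z T) x :=
    integral_nonneg (sobolevDensity_nonneg _)
  rw [div_mul_eq_mul_div, le_div_iff₀' hc₀, mul_assoc]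
  have hexp := Real.exp_pos K
  have hcross := add_nonneg (mul_nonneg (mul_pos hexp hM).le hFinal)
    (mul_nonneg (mul_pos hexp (show 0 < 3 * M ^ 2 by positivity)).le hBoundary)
  linarith

end GraphDomain

end CarlemanParameters

/-! ### From the energy estimate to the stability estimate -/

lemma setIntegral_Ioo_setIntegral_mul {X : Type*} [TopologicalSpace X] [SecondCountableTopology X]
    [MeasurableSpace X] [BorelSpace X] {μ : Measure X} [SFinite μ] {A : Set X}
    (hA : MeasurableSet A) {a b C : ℝ} (hab : a ≤ b) {g : X → ℝ → ℝ}
    (hg : ContinuousOn (Function.uncurry g) (A ×ˢ Ioo a b))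
    (hC : ∀ x ∈ A, ∀ t ∈ Ioo a b, |g x t| ≤ C) {w : X → ℝ} (hw : IntegrableOn w A μ) :
    ∫ t in Ioo a b, ∫ x in A, g x t * w x ∂μ = ∫ x in A, (∫ t in a..b, g x t) * w x ∂μ := by
  have hAI := hA.prod (measurableSet_Ioo (a := a) (b := b))
  have hint : Integrable (Function.uncurry fun x t => g x t * w x)
      ((μ.restrict A).prod (volume.restrict (Ioo a b))) := by
    refine (hw.comp_fst (volume.restrict (Ioo a b))).bdd_mul (c := C) ?_ ?_ <;>
      rw [Measure.prod_restrict]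
    · exact hg.aestronglyMeasurable hAI
    · exact (ae_restrict_mem hAI).mono fun q hq => hC q.1 hq.1 q.2 hq.2
  rw [← integral_integral_swap hint]
  simp only [integral_mul_const, intervalIntegral.integral_of_le hab, integral_Ioc_eq_integral_Ioo]

/-- The quadratic polynomial `c ↦ ∫ (g - c)²` is nonnegative, so its discriminant is not
positive. -/
lemma sq_intervalIntegral_le {a b : ℝ} (hab : a ≤ b) {g : ℝ → ℝ} (hg : ContinuousOn g (Icc a b)) :
    (∫ t in a..b, g t) ^ 2 ≤ (b - a) * ∫ t in a..b, g t ^ 2 := by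
  have hint {h : ℝ → ℝ} (hh : ContinuousOn h (Icc a b)) : IntervalIntegrable h volume a b :=
    hh.intervalIntegrable_of_Icc hab
  have hquad (c : ℝ) :
      0 ≤ (b - a) * (c * c) + -2 * (∫ t in a..b, g t) * c + ∫ t in a..b, g t ^ 2 :=
    calc 0 ≤ ∫ t in a..b, (g t - c) ^ 2 :=
          intervalIntegral.integral_nonneg hab fun t _ => sq_nonneg _
      _ = ∫ t in a..b, (g t ^ 2 - 2 * c * g t + c * c) := by
          congr! 2
          ring
      _ = _ := by
          rw [intervalIntegral.integral_add (hint (by fun_prop)) (hint (by fun_prop)),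
            intervalIntegral.integral_sub (hint (by fun_prop)) (hint (by fun_prop)),
            intervalIntegral.integral_const_mul, intervalIntegral.integral_const, smul_eq_mul]
          ring
  have hdiscrim := discrim_le_zero hquad
  rw [discrim] at hdiscrim
  linarith

lemma sq_le_mul_integral_deriv_sq {T : ℝ} {w w' : ℝ → ℝ}
    (hw : ∀ t ∈ Icc 0 T, HasDerivWithinAt w (w' t) (Icc 0 T) t) (hw' : ContinuousOn w' (Icc 0 T))
    (hw0 : w 0 = 0) {t : ℝ} (ht : t ∈ Icc 0 T) : w t ^ 2 ≤ T * ∫ τ in (0 : ℝ)..T, w' τ ^ 2 := by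
  have hT : 0 ≤ T := ht.1.trans ht.2
  have hsub : Icc 0 t ⊆ Icc 0 T := Icc_subset_Icc_right ht.2
  have hftc : ∫ τ in (0 : ℝ)..t, w' τ = w t := by
    rw [intervalIntegral.integral_eq_sub_of_hasDerivAt_of_le ht.1
      (fun τ hτ => (hw τ (hsub hτ)).continuousWithinAt.mono hsub)
      (fun τ hτ => (hw τ (hsub (Ioo_subset_Icc_self hτ))).hasDerivAt
        (Icc_mem_nhds hτ.1 (hτ.2.trans_le ht.2)))
      ((hw'.mono hsub).intervalIntegrable_of_Icc ht.1), hw0, sub_zero]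
  calc w t ^ 2 ≤ (t - 0) * ∫ τ in (0 : ℝ)..t, w' τ ^ 2 :=
        hftc ▸ sq_intervalIntegral_le ht.1 (hw'.mono hsub)
    _ ≤ T * ∫ τ in (0 : ℝ)..T, w' τ ^ 2 := by
        rw [sub_zero]
        exact mul_le_mul ht.2 (intervalIntegral.integral_mono_interval le_rfl ht.1 ht.2
          (Eventually.of_forall fun τ => sq_nonneg _) ((hw'.pow 2).intervalIntegrable_of_Icc hT))
          (intervalIntegral.integral_nonneg ht.1 fun τ _ => sq_nonneg _) hT

lemma energyDensity_zero_le_energyDensity_timeDeriv {E : Type*} [NormedAddCommGroup E]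
    [NormedSpace ℝ E] {T : ℝ} {A : Set E} {y : E → ℝ → ℝ} {x : E} (hT : 0 < T)
    (hy : ContDiffOn ℝ 1 (Function.uncurry y) (A ×ˢ Icc 0 T)) (hx : x ∈ A) (hy0 : y x 0 = 0) :
    energyDensity T 0 y x ≤ T ^ 2 * energyDensity T 0 (timeDeriv T y) x := by
  have hyx : ContinuousOn (y x) (Icc 0 T) := hy.continuousOn.uncurry_left x hx
  have hux : ContinuousOn (timeDeriv T y x) (Icc 0 T) :=
    (continuousOn_timeDeriv hT hy).uncurry_left x hx
  rw [energyDensity_zero, energyDensity_zero]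
  calc ∫ t in (0 : ℝ)..T, y x t ^ 2
    _ ≤ ∫ _ in (0 : ℝ)..T, T * ∫ τ in (0 : ℝ)..T, timeDeriv T y x τ ^ 2 :=
        intervalIntegral.integral_mono_on hT.le ((hyx.pow 2).intervalIntegrable_of_Icc hT.le)
          intervalIntegrable_const fun t ht => sq_le_mul_integral_deriv_sq
            (fun _ => hasDerivWithinAt_timeDeriv hy hx) hux hy0 ht
    _ = T ^ 2 * ∫ τ in (0 : ℝ)..T, timeDeriv T y x τ ^ 2 := by
        rw [intervalIntegral.integral_const, smul_eq_mul, sub_zero]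
        ring

namespace IsGraphLens

variable {T : ℝ} {y : Esp (d + 1) → ℝ → ℝ}

lemma integral_sq_add_deriv_sq (hG : IsGraphLens ρ₁ ℓ ℓt) (hT : 0 < T)
    (hy : ContDiffOn ℝ 1 (Function.uncurry y) (closure (graphDomain d ρ₁ ℓ ℓt) ×ˢ Icc 0 T)) :
    ∫ t in Ioo 0 T, ∫ x in graphDomain d ρ₁ ℓ ℓt, (y x t ^ 2 + deriv (y x) t ^ 2)
      = ∫ x in graphDomain d ρ₁ ℓ ℓt,
        (energyDensity T 0 y x + energyDensity T 0 (timeDeriv T y) x) := by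
  have hD := hG.isOpen.measurableSet
  have hu := continuousOn_timeDeriv hT hy
  have hsq := (hy.continuousOn.fun_pow 2).fun_add (hu.fun_pow 2)
  obtain ⟨C, hC⟩ := (hG.isCompact_closure.prod isCompact_Icc).exists_bound_of_continuousOn hsq
  have hsub : graphDomain d ρ₁ ℓ ℓt ×ˢ Ioo 0 T ⊆ closure (graphDomain d ρ₁ ℓ ℓt) ×ˢ Icc 0 T :=
    prod_mono subset_closure Ioo_subset_Icc_self
  calc ∫ t in Ioo 0 T, ∫ x in graphDomain d ρ₁ ℓ ℓt, (y x t ^ 2 + deriv (y x) t ^ 2)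
    _ = ∫ t in Ioo 0 T, ∫ x in graphDomain d ρ₁ ℓ ℓt,
          (y x t ^ 2 + timeDeriv T y x t ^ 2) * 1 :=
        setIntegral_congr_fun measurableSet_Ioo fun t ht => setIntegral_congr_fun hD fun x hx => by
          rw [(hasDerivAt_timeDeriv hy (subset_closure hx) ht).deriv, mul_one]
    _ = ∫ x in graphDomain d ρ₁ ℓ ℓt,
          (∫ t in (0 : ℝ)..T, (y x t ^ 2 + timeDeriv T y x t ^ 2)) * 1 :=
        setIntegral_Ioo_setIntegral_mul
          (g := fun x t => y x t ^ 2 + timeDeriv T y x t ^ 2) hD hT.le (hsq.mono hsub)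
          (fun x hx t ht => hC (x, t) (hsub ⟨hx, ht⟩)) (integrableOn_const hG.volume_lt_top.ne)
    _ = _ := setIntegral_congr_fun hD fun x hx => by
        have hint {v : Esp (d + 1) → ℝ → ℝ} (hv : ContinuousOn (Function.uncurry v) _) :
            IntervalIntegrable (fun t => v x t ^ 2) volume 0 T :=
          ((hv.uncurry_left x (subset_closure hx)).pow 2).intervalIntegrable_of_Icc hT.le
        rw [mul_one, energyDensity_zero, energyDensity_zero,
          intervalIntegral.integral_add (hint hy.continuousOn) (hint hu)]

lemma integral_sq_add_deriv_sq_le (hG : IsGraphLens ρ₁ ℓ ℓt) (hT : 0 < T)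
    (hy : ContDiffOn ℝ 1 (Function.uncurry y) (closure (graphDomain d ρ₁ ℓ ℓt) ×ˢ Icc 0 T))
    (hy0 : ∀ x ∈ graphDomain d ρ₁ ℓ ℓt, y x 0 = 0) :
    ∫ t in Ioo 0 T, ∫ x in graphDomain d ρ₁ ℓ ℓt, (y x t ^ 2 + deriv (y x) t ^ 2)
      ≤ (T ^ 2 + 1) * ∫ x in graphDomain d ρ₁ ℓ ℓt, energyDensity T 0 (timeDeriv T y) x := by
  have hint {v : Esp (d + 1) → ℝ → ℝ} (hv : ContinuousOn (Function.uncurry v) _) :=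
    hG.integrableOn_of_continuousOn_closure (continuousOn_energyDensity hT.le hv 0)
  have hu := hint (continuousOn_timeDeriv hT hy)
  rw [hG.integral_sq_add_deriv_sq hT hy, ← integral_const_mul]
  refine setIntegral_mono_on ((hint hy.continuousOn).add hu) (hu.const_mul _)
    hG.isOpen.measurableSet fun x hx => ?_
  rw [add_one_mul]
  gcongr
  exact energyDensity_zero_le_energyDensity_timeDeriv hT hy (subset_closure hx) (hy0 x hx)

lemma integral_upperGraph_deriv_sq (hG : IsGraphLens ρ₁ ℓ ℓt) (hT : 0 < T)
    (hy : ContDiffOn ℝ 1 (Function.uncurry y) (closure (graphDomain d ρ₁ ℓ ℓt) ×ˢ Icc 0 T)) :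
    ∫ t in Ioo 0 T, ∫ x' in ball (0 : Esp d) ρ₁,
        deriv (y (graphMk d x' (ℓ x'))) t ^ 2 * omegaW d ℓ x'
      = ∫ x' in ball (0 : Esp d) ρ₁,
        energyDensity T 0 (timeDeriv T y) (graphMk d x' (ℓ x')) * omegaW d ℓ x' := by
  have hsq := (continuousOn_timeDeriv hT hy).fun_pow 2
  obtain ⟨C, hC⟩ := (hG.isCompact_closure.prod isCompact_Icc).exists_bound_of_continuousOn hsq
  have hmaps : MapsTo (fun q : Esp d × ℝ => (graphMk d q.1 (ℓ q.1), q.2)) (ball 0 ρ₁ ×ˢ Ioo 0 T)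
      (closure (graphDomain d ρ₁ ℓ ℓt) ×ˢ Icc 0 T) := fun q hq =>
    ⟨hG.upperGraph_mem_closure hq.1, Ioo_subset_Icc_self hq.2⟩
  have hgraph : ContinuousOn (fun q : Esp d × ℝ => (graphMk d q.1 (ℓ q.1), q.2))
      (ball 0 ρ₁ ×ˢ Ioo 0 T) :=
    (hG.continuousOn_upperGraph.comp continuousOn_fst fun _ hq => hq.1).prodMk continuousOn_snd
  calc ∫ t in Ioo 0 T, ∫ x' in ball (0 : Esp d) ρ₁,
        deriv (y (graphMk d x' (ℓ x'))) t ^ 2 * omegaW d ℓ x'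
    _ = ∫ t in Ioo 0 T, ∫ x' in ball (0 : Esp d) ρ₁,
          timeDeriv T y (graphMk d x' (ℓ x')) t ^ 2 * omegaW d ℓ x' :=
        setIntegral_congr_fun measurableSet_Ioo fun t ht =>
          setIntegral_congr_fun measurableSet_ball fun x' hx' => by
            rw [(hasDerivAt_timeDeriv hy (hG.upperGraph_mem_closure hx') ht).deriv]
    _ = ∫ x' in ball (0 : Esp d) ρ₁,
          (∫ t in (0 : ℝ)..T, timeDeriv T y (graphMk d x' (ℓ x')) t ^ 2) * omegaW d ℓ x' :=
        setIntegral_Ioo_setIntegral_mul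
          (g := fun x' t => timeDeriv T y (graphMk d x' (ℓ x')) t ^ 2) measurableSet_ball hT.le
          (hsq.comp hgraph hmaps)
          (fun x' hx' t ht => hC (graphMk d x' (ℓ x'), t) (hmaps (mk_mem_prod hx' ht)))
          (integrableOn_omegaW hG.contDiffOn_upper)
    _ = _ := by simp only [energyDensity_zero]

end IsGraphLens

lemma IsSourceSolution.of_deriv_add_inner_gradient {E : Type*} [NormedAddCommGroup E]
    [InnerProductSpace ℝ E] [CompleteSpace E] {T : ℝ} {D : Set E} {H : E → E} {p f : E → ℝ}
    {R y : E → ℝ → ℝ} (hy : ContDiffOn ℝ 2 (Function.uncurry y) (closure D ×ˢ Icc 0 T))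
    (heq : ∀ x ∈ D, ∀ t ∈ Ioo 0 T,
      deriv (y x) t + ⟪H x, gradient (fun z => y z t) x⟫ + p x * y x t = R x t * f x)
    (hy0 : ∀ x ∈ D, y x 0 = 0) : IsSourceSolution T D H p R f y where
  contDiffOn := hy
  solvesTransport x hx t ht := by
    refine Eq.trans ?_ (heq x hx t ht)
    rw [inner_gradient_right, conj_trivial,
      (hasDerivAt_timeDeriv (hy.of_le one_le_two) (subset_closure hx) ht).deriv]
  initial_eq_zero := hy0

lemma sqrt_le_sqrt_mul_sqrt_add_sqrt {A C P Q : ℝ} (hC : 0 ≤ C) (hP : 0 ≤ P) (hQ : 0 ≤ Q)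
    (h : A ≤ C * (P + Q)) : √A ≤ √C * (√P + √Q) :=
  calc √A ≤ √(C * (P + Q)) := Real.sqrt_le_sqrt h
    _ = √C * √(P + Q) := Real.sqrt_mul hC _
    _ ≤ √C * (√P + √Q) := by
        gcongr
        refine Real.sqrt_le_iff.2 ⟨by positivity, ?_⟩
        rw [add_sq, Real.sq_sqrt hP, Real.sq_sqrt hQ]
        linarith [mul_nonneg (mul_nonneg zero_le_two (Real.sqrt_nonneg P)) (Real.sqrt_nonneg Q)]

lemma sqrt_add_sqrt_le {A B S P Q C c : ℝ} (hA : 0 ≤ A) (hS : 0 ≤ S) (hP : 0 ≤ P) (hQ : 0 ≤ Q)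
    (hC : 0 ≤ C) (hc : 0 ≤ c) (hAS : A + S ≤ C * (P + Q)) (hBS : B ≤ c * S) :
    √A + √B ≤ (√C + √(c * C)) * (√P + √Q) := by
  have hB : B ≤ c * C * (P + Q) := by
    rw [mul_assoc]
    exact hBS.trans (mul_le_mul_of_nonneg_left (by linarith) hc)
  rw [add_mul]
  exact add_le_add (sqrt_le_sqrt_mul_sqrt_add_sqrt hC hP hQ (by linarith))
    (sqrt_le_sqrt_mul_sqrt_add_sqrt (mul_nonneg hc hC) hP hQ hB)

/-! ### The weight of an admissible field -/

lemma fderiv_psiW_apply {n : ℕ} {H : Esp n → Esp n} {x : Esp n} (hH : DifferentiableAt ℝ H x)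
    (v : Esp n) : fderiv ℝ (psiW H) x v = ⟪x, fderiv ℝ H x v⟫ + ⟪v, H x⟫ := by
  have hinner := fderiv_inner_apply ℝ (differentiableAt_id (x := x)) hH v
  rwa [fderiv_id, ContinuousLinearMap.id_apply] at hinner

lemma norm_le_diam_of_zero_mem_closure {E : Type*} [NormedAddCommGroup E] {D : Set E}
    (hD : Bornology.IsBounded D) (h0 : (0 : E) ∈ closure D) {x : E} (hx : x ∈ closure D) :
    ‖x‖ ≤ diam D := by
  rw [← dist_zero_right, ← diam_closure]
  exact dist_le_diam_of_mem hD.closure hx h0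

namespace IsAdmissible

variable {n : ℕ} {M δ₀ : ℝ} {K : Set (Esp n)} {H : Esp n → Esp n}

lemma contDiffOn (hH : IsAdmissible M δ₀ K H) : ContDiffOn ℝ 1 H K := by
  obtain ⟨U, -, -, hKU, hHU, -⟩ := hH
  exact hHU.mono hKU

lemma half_sq_le_fderiv_psiW (hH : IsAdmissible M δ₀ K H) (hδ₀ : 0 ≤ δ₀) {x : Esp n} (hx : x ∈ K)
    (hsmall : ‖x‖ * M ^ 2 ≤ δ₀ ^ 2 / 2) : δ₀ ^ 2 / 2 ≤ fderiv ℝ (psiW H) x (H x) := by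
  obtain ⟨U, hU, -, hKU, hHU, hHM, hDM, hδ⟩ := hH
  have hdiff := (hHU.contDiffAt (hU.mem_nhds (hKU hx))).differentiableAt one_ne_zero
  have hcross : |⟪x, fderiv ℝ H x (H x)⟫| ≤ ‖x‖ * M ^ 2 :=
    calc |⟪x, fderiv ℝ H x (H x)⟫| ≤ ‖x‖ * ‖fderiv ℝ H x (H x)‖ := abs_real_inner_le_norm _ _
      _ ≤ ‖x‖ * (M * M) := by
          gcongr
          exact (fderiv ℝ H x).le_of_opNorm_le_of_le (hDM x (hKU hx)) (hHM x (hKU hx))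
      _ = ‖x‖ * M ^ 2 := by rw [sq]
  have hsq : δ₀ ^ 2 ≤ ‖H x‖ ^ 2 := pow_le_pow_left₀ hδ₀ (hδ x hx).le 2
  rw [fderiv_psiW_apply hdiff, real_inner_self_eq_norm_sq]
  linarith [neg_le_of_abs_le hcross]

lemma half_sq_le_fderiv_psiW_of_diam_le {D : Set (Esp n)} (hH : IsAdmissible M δ₀ (closure D) H)
    (hδ₀ : 0 ≤ δ₀) (hM : 0 < M) (hD : Bornology.IsBounded D) (h0 : (0 : Esp n) ∈ closure D)
    (hdiam : diam D ≤ δ₀ ^ 2 / (2 * M ^ 2)) {x : Esp n} (hx : x ∈ closure D) :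
    δ₀ ^ 2 / 2 ≤ fderiv ℝ (psiW H) x (H x) := by
  have hnorm := (norm_le_diam_of_zero_mem_closure hD h0 hx).trans hdiam
  rw [le_div_iff₀ (by positivity)] at hnorm
  exact hH.half_sq_le_fderiv_psiW hδ₀ hx (by linarith)

end IsAdmissible

lemma contDiffOn_psiW {n : ℕ} {K : Set (Esp n)} {H : Esp n → Esp n} (hH : ContDiffOn ℝ 1 H K) :
    ContDiffOn ℝ 1 (psiW H) K :=
  contDiffOn_id.inner ℝ hH

theorem proposition3_lipschitz_stability_final_time_general {T M ε : ℝ} (hT : 0 < T) (hε : 0 < ε)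
    (hG : IsGraphLens ρ₁ ℓ ℓt) {R : Esp (d + 1) → ℝ → ℝ}
    (hR : ContDiffOn ℝ 1 (Function.uncurry R) (closure (graphDomain d ρ₁ ℓ ℓt) ×ˢ Icc 0 T))
    (hR0 : ∀ x ∈ closure (graphDomain d ρ₁ ℓ ℓt), R x 0 ≠ 0)
    {H : Esp (d + 1) → Esp (d + 1)} (hH : ContDiffOn ℝ 1 H (closure (graphDomain d ρ₁ ℓ ℓt)))
    {p : Esp (d + 1) → ℝ} (hp : ∀ x ∈ graphDomain d ρ₁ ℓ ℓt, |p x| ≤ M)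
    {ψ : Esp (d + 1) → ℝ} (hψ : ContDiffOn ℝ 1 ψ (closure (graphDomain d ρ₁ ℓ ℓt)))
    (hψH : ∀ x ∈ graphDomain d ρ₁ ℓ ℓt, ε ≤ fderiv ℝ ψ x (H x))
    (hν : ∀ x' ∈ ball (0 : Esp d) ρ₁,
      ⟪H (graphMk d x' (ℓ x' - ℓt x')), nuDown d (fun z => ℓ z - ℓt z) x'⟫ ≤ 0) :
    ∃ C > (0 : ℝ),
      ∀ (f : Esp (d + 1) → ℝ) (y : Esp (d + 1) → ℝ → ℝ),
        ContinuousOn f (closure (graphDomain d ρ₁ ℓ ℓt)) →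
        ContDiffOn ℝ 2 (fun q : Esp (d + 1) × ℝ => y q.1 q.2)
          (closure (graphDomain d ρ₁ ℓ ℓt) ×ˢ Icc 0 T) →
        (∀ x ∈ graphDomain d ρ₁ ℓ ℓt, ∀ t ∈ Ioo (0 : ℝ) T,
          deriv (y x) t + ⟪H x, gradient (fun z => y z t) x⟫ + p x * y x t
            = R x t * f x) →
        (∀ x ∈ graphDomain d ρ₁ ℓ ℓt, y x 0 = 0) →
        Real.sqrt (∫ x in graphDomain d ρ₁ ℓ ℓt, (f x) ^ 2)
          + Real.sqrt (∫ t in Ioo 0 T, ∫ x in graphDomain d ρ₁ ℓ ℓt,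
              ((y x t) ^ 2 + (deriv (y x) t) ^ 2))
        ≤ C * (Real.sqrt (∫ t in Ioo 0 T, ∫ x' in ball (0 : Esp d) ρ₁,
            (deriv (y (graphMk d x' (ℓ x'))) t) ^ 2 * omegaW d ℓ x')
          + Real.sqrt (∫ x in graphDomain d ρ₁ ℓ ℓt,
              ((y x T) ^ 2 + ‖gradient (fun z => y z T) x‖ ^ 2))) := by
  obtain ⟨m, κ, s, hc⟩ := exists_carlemanParameters hT hG.isOpen hG.isCompact_closure hR hR0 hH hp
    hε hψH
  obtain ⟨C, hC, hmain⟩ :=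
    hc.exists_integral_sq_add_integral_energyDensity_le hG hT hR hR0 hH hψ hν
  refine ⟨√C + √((T ^ 2 + 1) * C), by positivity, fun f y hf hy heq hy0 => ?_⟩
  have hy1 := hy.of_le one_le_two
  have hbound := hmain f y hf (.of_deriv_add_inner_gradient hy heq hy0)
  have hBoundary : 0 ≤ ∫ x' in ball (0 : Esp d) ρ₁,
      energyDensity T 0 (timeDeriv T y) (graphMk d x' (ℓ x')) * omegaW d ℓ x' :=
    integral_nonneg fun x' => mul_nonneg (energyDensity_nonneg hT.le _ _ _) (omegaW_nonneg _ _)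
  rw [hG.integral_upperGraph_deriv_sq hT hy1]
  exact sqrt_add_sqrt_le (integral_nonneg fun x => sq_nonneg _)
    (integral_nonneg (energyDensity_nonneg hT.le 0 _)) hBoundary
    (integral_nonneg (sobolevDensity_nonneg _)) hC.le (by positivity) hbound
    (hG.integral_sq_add_deriv_sq_le hT hy1 hy0)

/-- **Proposition 3** (unconditional Lipschitz stability with final-time data). -/
theorem proposition3_lipschitz_stability_final_time
    (d : ℕ) (hd : 1 ≤ d) (T M δ₀ ρ₁ : ℝ)
    (hT : 0 < T) (hM : 0 < M) (hδ₀ : 0 < δ₀) (hρ₁ : 0 < ρ₁)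
    (ℓ ℓt : Esp d → ℝ)
    (hℓ : ContDiffOn ℝ 2 ℓ (closedBall 0 ρ₁))
    (hℓt : ContDiffOn ℝ 2 ℓt (closedBall 0 ρ₁))
    (hℓtpos : ∀ x' : Esp d, ‖x'‖ < ρ₁ → 0 < ℓt x')
    (hℓt0 : ∀ x' : Esp d, ‖x'‖ = ρ₁ → ℓt x' = 0)
    (R : Esp (d+1) → ℝ → ℝ)
    (hR : ContDiffOn ℝ 2 (fun q : Esp (d+1) × ℝ => R q.1 q.2)
      (closure (graphDomain d ρ₁ ℓ ℓt) ×ˢ Icc 0 T))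
    (H : Esp (d+1) → Esp (d+1))
    (hH : IsAdmissible M δ₀ (closure (graphDomain d ρ₁ ℓ ℓt)) H)
    (p₁ : Esp (d+1) → ℝ) (hp₁ : ContinuousOn p₁ (closure (graphDomain d ρ₁ ℓ ℓt)))
    (hp₁b : ∀ x ∈ closure (graphDomain d ρ₁ ℓ ℓt), |p₁ x| ≤ M)
    (h0D : (0 : Esp (d+1)) ∈ closure (graphDomain d ρ₁ ℓ ℓt))
    (hdiam : Metric.diam (graphDomain d ρ₁ ℓ ℓt)
      < min 1 (min (δ₀ ^ 2 / (2 * M ^ 2)) (δ₀ ^ 2 * T / (16 * M))))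
    (hR0 : ∀ x ∈ closure (graphDomain d ρ₁ ℓ ℓt), R x 0 ≠ 0)
    (hHν₂ : ∀ x' : Esp d, ‖x'‖ < ρ₁ →
      ⟪H (graphMk d x' (ℓ x' - ℓt x')), nuDown d (fun z => ℓ z - ℓt z) x'⟫ ≤ 0)
 :
    ∃ C > (0:ℝ),
      ∀ (f : Esp (d+1) → ℝ) (y : Esp (d+1) → ℝ → ℝ),
        ContinuousOn f (closure (graphDomain d ρ₁ ℓ ℓt)) →
        ContDiffOn ℝ 2 (fun q : Esp (d+1) × ℝ => y q.1 q.2)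
          (closure (graphDomain d ρ₁ ℓ ℓt) ×ˢ Icc 0 T) →
        (∀ x ∈ graphDomain d ρ₁ ℓ ℓt, ∀ t ∈ Ioo (0:ℝ) T,
          deriv (y x) t + ⟪H x, gradient (fun z => y z t) x⟫ + p₁ x * y x t
            = R x t * f x) →
        (∀ x ∈ graphDomain d ρ₁ ℓ ℓt, y x 0 = 0) →
        Real.sqrt (∫ x in graphDomain d ρ₁ ℓ ℓt, (f x) ^ 2)
          + Real.sqrt (∫ t in Ioo 0 T, ∫ x in graphDomain d ρ₁ ℓ ℓt,
              ((y x t) ^ 2 + (deriv (y x) t) ^ 2))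
        ≤ C * (Real.sqrt (∫ t in Ioo 0 T, ∫ x' in ball (0 : Esp d) ρ₁,
            (deriv (y (graphMk d x' (ℓ x'))) t) ^ 2 * omegaW d ℓ x')
          + Real.sqrt (∫ x in graphDomain d ρ₁ ℓ ℓt,
              ((y x T) ^ 2 + ‖gradient (fun z => y z T) x‖ ^ 2))) := by
  have hG : IsGraphLens ρ₁ ℓ ℓt := ⟨hℓ.of_le one_le_two, hℓt.of_le one_le_two,
    fun x' hx' => hℓtpos x' (mem_ball_zero_iff.1 hx'),
    fun x' hx' => hℓt0 x' (mem_sphere_zero_iff_norm.1 hx')⟩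
  exact proposition3_lipschitz_stability_final_time_general hT (half_pos (pow_pos hδ₀ 2)) hG
    (hR.of_le one_le_two) hR0 hH.contDiffOn (fun x hx => hp₁b x (subset_closure hx))
    (contDiffOn_psiW hH.contDiffOn)
    (fun x hx => hH.half_sq_le_fderiv_psiW_of_diam_le hδ₀.le hM
      (hG.isCompact_closure.isBounded.subset subset_closure) h0D
      (hdiam.le.trans ((min_le_right _ _).trans (min_le_left _ _))) (subset_closure hx))
    fun x' hx' => hHν₂ x' (mem_ball_zero_iff.1 hx')
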